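/- arXiv:1212.4862 — 5 statements merged into one kernel-verified Lean document; each statement's English description precedes it below -/
import Mathlib

section
/- Fix scalars (λ_u,μ_u) ≠ (0,0) in k² for 0 ≤ u ≤ d₁−1 and let (r_i, q_i)_{0 ≤ i ≤ d₁−1} be a division system up to level d₁−1. The element r_{d₁−1} has degree 0 in (X₀,X₁), so for homogeneous F, G ∈ k[X₀,X₁] of degrees d₁, d₂ its evaluation at (F,G) is an element of k. Then for all nonzero homogeneous F, G ∈ k[X₀,X₁] of degrees d₁ and d₂: the evaluation of r_{d₁−1} at (F,G) is zero if and only if F and G have a common divisor which is not a unit. -/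
/-!
The polynomial `r_{d₁-1}` equals, up to a nonzero scalar of `k`, the resultant of the generic forms
`f` and `g`.

Regard `A` as a ring of binary forms over `B = k[f_j, g_j]`, and write the division identities
uniformly, with `P₀ = g`, `P₁ = f`, `P_{i+2} = r_i`, `s₀ = 1` and
`s_{i+1} = P_{i+1}(x_i) ^ e_i`, as
`s_{i+1} P_i = P_{i+1} q_i + s_i L_{x_i} ^ e_i P_{i+2}`.
Take the resultant of both sides with `P_{i+1}`. The multiple of `P_{i+1}` disappears, and
`L_{x_i} ^ e_i` contributes `P_{i+1}(x_i) ^ e_i = s_{i+1}` (`hres_linForm_pow_mul`). By induction,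
`Res(P_{i+1}, P_i)` is, up to a unit, `s_i ^ deg P_{i+1} * Res(f, g)`
(`DivSys.hres_associated`). For `i = d₁` the form `P_{d₁+1} = r_{d₁-1}` is a constant and `P_{d₁}`
is linear, so that this reads `r_{d₁-1} = unit * Res(f, g)`.

The cancellations in this induction require that no `s_i` is zero. It suffices to find one
specialization `(F, G)` for which no `s_i` vanishes, and this is done by running the division
backwards from a form vanishing at none of the points `x_i` (`exists_start`), which is possible as
`k` is infinite.

Specializing to a given pair `(F, G)`, the evaluation of `r_{d₁-1}` vanishes if and only if the
resultant of `F` and `G` does, which is to say that they have a nonunit common divisor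
(`hres_eq_zero_iff`).
-/

open MvPolynomial

noncomputable section

/-- Variables of the ring `A = k[X₀,X₁,f₀,f₁,…,g₀,g₁,…]`. -/
abbrev Avars : Type := Fin 2 ⊕ ℕ ⊕ ℕ

/-- The weights defining the trigrading of `A` (total degree in the `X`'s, in the `f`'s,
and in the `g`'s). -/
def wA : Avars → ℕ × ℕ × ℕ
  | Sum.inl _ => (1, 0, 0)
  | Sum.inr (Sum.inl _) => (0, 1, 0)
  | Sum.inr (Sum.inr _) => (0, 0, 1)

variable (k : Type) [Field k]

/-- The variable `Xᵢ` of `A`. -/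
def XA (i : Fin 2) : MvPolynomial Avars k := X (Sum.inl i)

/-- The variable `f_j` of `A`. -/
def fA (j : ℕ) : MvPolynomial Avars k := X (Sum.inr (Sum.inl j))

/-- The variable `g_j` of `A`. -/
def gA (j : ℕ) : MvPolynomial Avars k := X (Sum.inr (Sum.inr j))

/-- The generic binary form `f = ∑_{j=0}^{d₁} f_j X₀^{d₁-j} X₁^j`. -/
def fgen (d₁ : ℕ) : MvPolynomial Avars k :=
  ∑ j ∈ Finset.range (d₁ + 1), fA k j * XA k 0 ^ (d₁ - j) * XA k 1 ^ j

/-- The generic binary form `g = ∑_{j=0}^{d₂} g_j X₀^{d₂-j} X₁^j`. -/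
def ggen (d₂ : ℕ) : MvPolynomial Avars k :=
  ∑ j ∈ Finset.range (d₂ + 1), gA k j * XA k 0 ^ (d₂ - j) * XA k 1 ^ j

/-- The linear form `L_{λ,μ} = λ X₁ - μ X₀`. -/
def Lform (lam mu : k) : MvPolynomial Avars k := C lam * XA k 1 - C mu * XA k 0

/-- Substitution `X₀ ↦ λ`, `X₁ ↦ μ`, leaving the `f` and `g` variables unchanged:
this is `a ↦ a(λ,μ)`. -/
def evalXY (lam mu : k) : MvPolynomial Avars k →ₐ[k] MvPolynomial Avars k :=
  aeval (Sum.elim (fun t : Fin 2 => if t = 0 then C lam else C mu)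
    (fun j => X (Sum.inr j)))

/-- A division system up to level `j` for the degrees `(d₁, d₂)` and the scalars
`(lam u, mu u)`: a family `(r_i, q_i)_{0 ≤ i ≤ j}` of trihomogeneous elements of `A`, where
`r_i` has tridegree `(d₁-1-i, d₂-d₁+1+i, 1+i)`, satisfying the identities
`f(λ₀,μ₀)^{d₂-d₁+1}·g = f·q₀ + L_{λ₀,μ₀}^{d₂-d₁+1}·r₀`;
`r₀(λ₁,μ₁)²·f = r₀·q₁ + f(λ₀,μ₀)^{d₂-d₁+1}·L_{λ₁,μ₁}²·r₁` (if `j ≥ 1`); and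
`r_{i-1}(λ_i,μ_i)²·r_{i-2} = r_{i-1}·q_i + r_{i-2}(λ_{i-1},μ_{i-1})²·L_{λ_i,μ_i}²·r_i`
for `2 ≤ i ≤ j`. -/
def IsDivisionSystem (d₁ d₂ : ℕ) (lam mu : ℕ → k) (j : ℕ)
    (r q : ℕ → MvPolynomial Avars k) : Prop :=
  (∀ i ≤ j, IsWeightedHomogeneous wA (r i) (d₁ - 1 - i, d₂ - d₁ + 1 + i, 1 + i)) ∧
  (∀ i ≤ j, ∃ m : ℕ × ℕ × ℕ, IsWeightedHomogeneous wA (q i) m) ∧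
  ((evalXY k (lam 0) (mu 0) (fgen k d₁)) ^ (d₂ - d₁ + 1) * ggen k d₂
    = fgen k d₁ * q 0 + Lform k (lam 0) (mu 0) ^ (d₂ - d₁ + 1) * r 0) ∧
  (1 ≤ j → (evalXY k (lam 1) (mu 1) (r 0)) ^ 2 * fgen k d₁
    = r 0 * q 1 + (evalXY k (lam 0) (mu 0) (fgen k d₁)) ^ (d₂ - d₁ + 1)
        * Lform k (lam 1) (mu 1) ^ 2 * r 1) ∧
  (∀ i, 2 ≤ i → i ≤ j → (evalXY k (lam i) (mu i) (r (i - 1))) ^ 2 * r (i - 2)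
    = r (i - 1) * q i + (evalXY k (lam (i - 1)) (mu (i - 1)) (r (i - 2))) ^ 2
        * Lform k (lam i) (mu i) ^ 2 * r i)

/-- Evaluation of an element of `A` at a pair `(F, G)` of binary forms of degrees `d₁` and
`d₂`: the `k`-algebra map fixing `X₀, X₁` and sending `f_j` (resp. `g_j`) to the coefficient
of `X₀^{d₁-j}X₁^j` in `F` (resp. of `X₀^{d₂-j}X₁^j` in `G`). -/
def evalFG (d₁ d₂ : ℕ) (F G : MvPolynomial (Fin 2) k) :
    MvPolynomial Avars k →ₐ[k] MvPolynomial (Fin 2) k :=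
  aeval (Sum.elim (fun t : Fin 2 => X t)
    (Sum.elim
      (fun j => C (coeff (Finsupp.single 0 (d₁ - j) + Finsupp.single 1 j) F))
      (fun j => C (coeff (Finsupp.single 0 (d₂ - j) + Finsupp.single 1 j) G))))

/-- The value of a binary form at the point `(λ, μ)`. -/
def evalPt (lam mu : k) (P : MvPolynomial (Fin 2) k) : k :=
  eval (fun t : Fin 2 => if t = 0 then lam else mu) P

/-! ### Resultants of binary forms -/

lemma eval_homogenize_eq_sum {B : Type*} [CommRing B] (p : Polynomial B) (m : ℕ) (x : Fin 2 → B) :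
    eval x (p.homogenize m) =
      ∑ i ∈ Finset.range (m + 1), p.coeff i * (x 0 ^ i * x 1 ^ (m - i)) := by
  rw [Polynomial.homogenize, Finset.Nat.sum_antidiagonal_eq_sum_range_succ_mk, map_sum]
  refine Finset.sum_congr rfl fun i hi => ?_
  rw [eval_monomial, Finsupp.update_eq_add_single (by simp),
    Finsupp.prod_add_index' (by simp) (by intros; rw [pow_add])]
  simp

/-- Dehomogenization `P(X₀, X₁) ↦ P(T, 1)`. -/
def dehom {B : Type*} [CommRing B] : MvPolynomial (Fin 2) B →ₐ[B] Polynomial B :=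
  aeval ![Polynomial.X, 1]

lemma homogenize_dehom {B : Type*} [CommRing B] {P : MvPolynomial (Fin 2) B} {m : ℕ}
    (hP : P.IsHomogeneous m) : (dehom P).homogenize m = P :=
  Polynomial.homogenize_eq_of_isHomogeneous hP rfl

lemma natDegree_dehom_le {B : Type*} [CommRing B] {P : MvPolynomial (Fin 2) B} {m : ℕ}
    (hP : P.IsHomogeneous m) : (dehom P).natDegree ≤ m := by
  rw [P.as_sum, map_sum]
  refine Polynomial.natDegree_sum_le_of_forall_le _ _ fun d hd => ?_
  have h : d.degree = m := by
    by_contra h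
    exact mem_support_iff.1 hd (hP.coeff_eq_zero h)
  rw [Finsupp.degree_eq_sum, Fin.sum_univ_two] at h
  rw [dehom, aeval_monomial, Finsupp.prod_fintype _ _ (by simp), Fin.prod_univ_two,
    Polynomial.algebraMap_eq]
  simp only [Matrix.cons_val_zero, Matrix.cons_val_one, one_pow, mul_one]
  exact (Polynomial.natDegree_C_mul_X_pow_le _ _).trans (by omega)

/-- The coefficient of `T ^ m` in `P(T, 1)` is the value of `P` at the point at infinity `(1, 0)`. -/
lemma coeff_dehom {B : Type*} [CommRing B] {P : MvPolynomial (Fin 2) B} {m : ℕ}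
    (hP : P.IsHomogeneous m) : (dehom P).coeff m = eval ![1, 0] P := by
  conv_rhs => rw [← homogenize_dehom hP, eval_homogenize_eq_sum, Finset.sum_range_succ]
  rw [Finset.sum_eq_zero]
  · simp
  · intro i hi
    have : m - i ≠ 0 := by have := Finset.mem_range.1 hi; omega
    simp [this]

/-- The linear form `x₀ X₁ - x₁ X₀`, which vanishes at the point `x`. -/
def linForm {B : Type*} [CommRing B] (x : Fin 2 → B) : MvPolynomial (Fin 2) B :=
  C (x 0) * X 1 - C (x 1) * X 0

/-- The resultant of two binary forms `P` and `Q` of degrees `m` and `n`, as the resultant of their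
dehomogenizations taken at the formal degrees `m` and `n`. -/
def hres {B : Type*} [CommRing B] (m n : ℕ) (P Q : MvPolynomial (Fin 2) B) : B :=
  Polynomial.resultant (dehom P) (dehom Q) m n

/-- The resultant of `P` and `L_x * Q` is `P(x)` times the resultant of `P` and `Q`. After
dehomogenization, `L_x` is a constant at formal degree `1` if `x₁ = 0`, and `-x₁` times the monic
`T - x₀ / x₁` if `x₁` is invertible; the two cases are treated separately. -/
lemma hres_linForm_mul {B : Type*} [CommRing B] [IsDomain B] {P Q : MvPolynomial (Fin 2) B}
    {m n : ℕ} (hP : P.IsHomogeneous m) (hQ : Q.IsHomogeneous n) (x : Fin 2 → B)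
    (hx : x 1 = 0 ∨ IsUnit (x 1)) :
    hres m (n + 1) P (linForm x * Q) = eval x P * hres m n P Q := by
  have hp := natDegree_dehom_le hP
  have hq := natDegree_dehom_le hQ
  have hev : eval x P =
      ∑ i ∈ Finset.range (m + 1), (dehom P).coeff i * (x 0 ^ i * x 1 ^ (m - i)) := by
    conv_lhs => rw [← homogenize_dehom hP, eval_homogenize_eq_sum]
  have hL : dehom (linForm x) = Polynomial.C (x 0) - Polynomial.C (x 1) * Polynomial.X := by
    simp [dehom, linForm]
  rw [hres, hres, map_mul, hL, hev]
  generalize dehom P = p at *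
  generalize dehom Q = q at *
  rcases hx with hx | ⟨u, hx⟩
  · rw [hx, Finset.sum_range_succ, Finset.sum_eq_zero, map_zero, zero_mul, sub_zero,
      Polynomial.resultant_C_mul_right, Polynomial.resultant_add_right_deg _ _ _ _ _ hq]
    · simp; ring
    · intro i hi
      have : m - i ≠ 0 := by have := Finset.mem_range.1 hi; omega
      simp [this]
  · have e : Polynomial.C (x 0) - Polynomial.C (x 1) * Polynomial.X =
        Polynomial.C (-(x 1)) * (Polynomial.X - Polynomial.C (x 0 * ↑u⁻¹)) := by
      rw [← hx, mul_sub, ← Polynomial.C_mul]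
      have : -(u : B) * (x 0 * ↑u⁻¹) = - x 0 := by
        rw [neg_mul, mul_left_comm, Units.mul_inv, mul_one]
      rw [this]; simp; ring
    obtain ⟨c, rfl⟩ := Nat.exists_eq_add_of_le hq
    rw [e, mul_assoc, Polynomial.resultant_C_mul_right,
      show q.natDegree + c + 1 = (Polynomial.X - Polynomial.C (x 0 * (↑u⁻¹ : B))).natDegree
        + q.natDegree + c by rw [Polynomial.natDegree_X_sub_C]; ring,
      Polynomial.resultant_add_right_deg _ _ _ _ _ Polynomial.natDegree_mul_le,
      Polynomial.resultant_mul_right _ _ _ _ hp, Polynomial.resultant_add_right_deg _ _ _ _ _ le_rfl,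
      Polynomial.natDegree_X_sub_C, Polynomial.resultant_X_sub_C_right _ _ _ hp,
      Polynomial.eval_eq_sum_range' (Nat.lt_succ_of_le hp)]
    have : ∑ i ∈ Finset.range (m + 1), p.coeff i * (x 0 ^ i * x 1 ^ (m - i)) =
        x 1 ^ m * ∑ i ∈ Finset.range (m + 1), p.coeff i * (x 0 * ↑u⁻¹) ^ i := by
      rw [Finset.mul_sum]
      refine Finset.sum_congr rfl fun i hi => ?_
      have hi : i ≤ m := Nat.lt_succ_iff.1 (Finset.mem_range.1 hi)
      have h1 : (x 1) ^ i * (↑u⁻¹ : B) ^ i = 1 := by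
        rw [← hx, ← mul_pow, Units.mul_inv, one_pow]
      have h2 : x 1 ^ m = x 1 ^ (m - i) * x 1 ^ i := by rw [← pow_add, Nat.sub_add_cancel hi]
      rw [h2, mul_pow]
      linear_combination (- p.coeff i * x 0 ^ i * x 1 ^ (m - i)) * h1
    rw [this, neg_pow (x 1)]
    have h3 : (-1 : B) ^ m * (-1) ^ m = 1 := by rw [← mul_pow]; simp
    linear_combination (x 1 ^ m * p.coeff m ^ c *
      (∑ i ∈ Finset.range (m + 1), p.coeff i * (x 0 * ↑u⁻¹) ^ i) *
      p.resultant q m q.natDegree) * h3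

lemma isHomogeneous_linForm {B : Type*} [CommRing B] (x : Fin 2 → B) :
    (linForm x).IsHomogeneous 1 :=
  (isHomogeneous_C_mul_X _ _).sub (isHomogeneous_C_mul_X _ _)

lemma hres_linForm_pow_mul {B : Type*} [CommRing B] [IsDomain B] {P Q : MvPolynomial (Fin 2) B}
    {m n : ℕ} (hP : P.IsHomogeneous m) (hQ : Q.IsHomogeneous n) (x : Fin 2 → B)
    (hx : x 1 = 0 ∨ IsUnit (x 1)) (e : ℕ) :
    hres m (n + e) P (linForm x ^ e * Q) = eval x P ^ e * hres m n P Q := by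
  induction e with
  | zero => simp
  | succ e ih =>
    have h : (linForm x ^ e * Q).IsHomogeneous (n + e) := by
      have := ((isHomogeneous_linForm x).pow e).mul hQ
      rwa [one_mul, add_comm] at this
    rw [pow_succ', mul_assoc, ← add_assoc, hres_linForm_mul hP h x hx, ih]
    ring

lemma hres_C_mul {B : Type*} [CommRing B] (P Q : MvPolynomial (Fin 2) B) (m n : ℕ) (b : B) :
    hres m n P (C b * Q) = b ^ m * hres m n P Q := by
  have : dehom (C b : MvPolynomial (Fin 2) B) = Polynomial.C b := by simp [dehom]
  rw [hres, map_mul, this, Polynomial.resultant_C_mul_right, hres]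

lemma hres_mul_add {B : Type*} [CommRing B] {P : MvPolynomial (Fin 2) B}
    (Q S : MvPolynomial (Fin 2) B) {m n : ℕ} (hP : P.IsHomogeneous m)
    (hS : (dehom S).natDegree + m ≤ n) : hres m n P (P * S + Q) = hres m n P Q := by
  rw [hres, map_add, map_mul, add_comm,
    Polynomial.resultant_add_mul_right _ _ _ _ _ hS (natDegree_dehom_le hP), hres]

lemma hres_comm_associated {B : Type*} [CommRing B] (P Q : MvPolynomial (Fin 2) B) (m n : ℕ) :
    Associated (hres m n P Q) (hres n m Q P) := by
  rw [hres, Polynomial.resultant_comm]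
  have : IsUnit ((-1 : B) ^ (m * n)) := isUnit_one.neg.pow _
  exact (associated_unit_mul_left _ _ this)

/-! ### Division systems and resultants -/

/-- The degrees `d₂, d₁, d₁ - 1, d₁ - 2, …` of `g, f, r₀, r₁, …` in `(X₀, X₁)`. -/
def degP (d₁ d₂ : ℕ) : ℕ → ℕ
  | 0 => d₂
  | i + 1 => d₁ - i

/-- The exponents of the linear forms in the successive divisions. -/
def expo (d₁ d₂ : ℕ) : ℕ → ℕ
  | 0 => d₂ - d₁ + 1
  | _ + 1 => 2

/-- The scalars `1, f(x₀)^{d₂-d₁+1}, r₀(x₁)², r₁(x₂)², …`. -/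
def scal {B : Type*} [CommRing B] (d₁ d₂ : ℕ) (x : ℕ → Fin 2 → B)
    (P : ℕ → MvPolynomial (Fin 2) B) : ℕ → B
  | 0 => 1
  | i + 1 => eval (x i) (P (i + 1)) ^ expo d₁ d₂ i

/-- A division system over an arbitrary ring of coefficients, with the points `x i` in place of
`(λ_i, μ_i)` and the dividends renumbered so that `P 0 = g`, `P 1 = f` and `P (i + 2) = r_i`. With
`scal 0 = 1`, all the division identities take the same shape. -/
structure DivSys {B : Type*} [CommRing B] (d₁ d₂ : ℕ) (x : ℕ → Fin 2 → B)
    (P Q : ℕ → MvPolynomial (Fin 2) B) : Prop where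
  hom : ∀ i ≤ d₁ + 1, (P i).IsHomogeneous (degP d₁ d₂ i)
  quot_hom : ∀ i < d₁, ∃ m, (Q i).IsHomogeneous m
  eqn : ∀ i < d₁, C (scal d₁ d₂ x P (i + 1)) * P i =
    P (i + 1) * Q i + C (scal d₁ d₂ x P i) * (linForm (x i) ^ expo d₁ d₂ i * P (i + 2))

lemma degP_succ {d₁ d₂ i : ℕ} (hi : i < d₁) :
    degP d₁ d₂ (i + 1) = degP d₁ d₂ (i + 2) + 1 := by
  simp only [degP]; omega

lemma degP_add_expo {d₁ d₂ i : ℕ} (hd : d₁ < d₂) (hi : i < d₁) :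
    degP d₁ d₂ i = degP d₁ d₂ (i + 2) + expo d₁ d₂ i := by
  cases i <;> simp only [degP, expo] <;> omega

lemma degP_le {d₁ d₂ i : ℕ} (hd : d₁ < d₂) :
    degP d₁ d₂ (i + 1) ≤ degP d₁ d₂ i := by
  cases i <;> simp only [degP] <;> omega

lemma DivSys.hom_linForm {B : Type*} [CommRing B] {d₁ d₂ : ℕ} {x : ℕ → Fin 2 → B}
    {P Q : ℕ → MvPolynomial (Fin 2) B} (h : DivSys d₁ d₂ x P Q) (hd : d₁ < d₂) {i : ℕ}
    (hi : i < d₁) :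
    (linForm (x i) ^ expo d₁ d₂ i * P (i + 2)).IsHomogeneous (degP d₁ d₂ i) := by
  have := ((isHomogeneous_linForm (x i)).pow (expo d₁ d₂ i)).mul (h.hom (i + 2) (by omega))
  rwa [one_mul, add_comm (expo d₁ d₂ i), ← degP_add_expo hd hi] at this

/-- The degree of the quotient is at most the expected one. This is where the homogeneity of the
quotients is used: it allows the multiple `P (i + 1) * Q i` to be discarded in a resultant. -/
lemma DivSys.natDegree_quot {B : Type*} [CommRing B] [IsDomain B] {d₁ d₂ : ℕ}
    {x : ℕ → Fin 2 → B} {P Q : ℕ → MvPolynomial (Fin 2) B} (h : DivSys d₁ d₂ x P Q)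
    (hd : d₁ < d₂) {i : ℕ} (hi : i < d₁) (hP : P (i + 1) ≠ 0) :
    (dehom (Q i)).natDegree + degP d₁ d₂ (i + 1) ≤ degP d₁ d₂ i := by
  by_cases hQ : Q i = 0
  · rw [hQ, map_zero, Polynomial.natDegree_zero, zero_add]
    exact degP_le hd
  obtain ⟨m, hm⟩ := h.quot_hom i hi
  have h1 : (P (i + 1) * Q i).IsHomogeneous (degP d₁ d₂ i) := by
    rw [← sub_eq_of_eq_add (h.eqn i hi)]
    exact ((h.hom i (by omega)).C_mul _).sub ((h.hom_linForm hd hi).C_mul _)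
  have h2 := ((h.hom (i + 1) (by omega)).mul hm).inj_right h1 (mul_ne_zero hP hQ)
  have := natDegree_dehom_le hm
  omega

/-- Up to a unit, the resultant of two successive terms of a division system is a power of a scalar
times the resultant of the first two terms. Indeed, dividing `P i` by `P (i + 1)` and using the
multiplicativity of the resultant, the value `P (i + 1) (x i) ^ expo i` contributed by the power of
the linear form is exactly the next scalar, and it cancels. -/
lemma DivSys.hres_associated {B : Type*} [CommRing B] [IsDomain B] {d₁ d₂ : ℕ}
    {x : ℕ → Fin 2 → B} {P Q : ℕ → MvPolynomial (Fin 2) B} (h : DivSys d₁ d₂ x P Q)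
    (hd : d₁ < d₂) (hx : ∀ i < d₁, x i 1 = 0 ∨ IsUnit (x i 1))
    (ha : ∀ i ≤ d₁, scal d₁ d₂ x P i ≠ 0) {i : ℕ} (hi : i ≤ d₁) :
    Associated (hres (degP d₁ d₂ (i + 1)) (degP d₁ d₂ i) (P (i + 1)) (P i))
      (scal d₁ d₂ x P i ^ degP d₁ d₂ (i + 1) *
        hres (degP d₁ d₂ 1) (degP d₁ d₂ 0) (P 1) (P 0)) := by
  induction i with
  | zero => simp [scal]
  | succ i ih =>
    have hi' : i < d₁ := hi
    have ih := ih hi'.le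
    have hs := ha (i + 1) hi
    have hP : P (i + 1) ≠ 0 := by
      intro h0
      apply hs
      have : expo d₁ d₂ i ≠ 0 := by cases i <;> simp [expo]
      simp [scal, h0, this]
    -- divide `P i` by `P (i + 1)` and take resultants with `P (i + 1)`
    have key : scal d₁ d₂ x P (i + 1) ^ degP d₁ d₂ (i + 1) *
        hres (degP d₁ d₂ (i + 1)) (degP d₁ d₂ i) (P (i + 1)) (P i) =
        scal d₁ d₂ x P i ^ degP d₁ d₂ (i + 1) * (scal d₁ d₂ x P (i + 1) *
          hres (degP d₁ d₂ (i + 1)) (degP d₁ d₂ (i + 2)) (P (i + 1)) (P (i + 2))) := by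
      rw [← hres_C_mul, h.eqn i hi', hres_mul_add _ _ (h.hom (i + 1) (by omega))
        (h.natDegree_quot hd hi' hP), hres_C_mul, degP_add_expo hd hi',
        hres_linForm_pow_mul (h.hom (i + 1) (by omega)) (h.hom (i + 2) (by omega)) _ (hx i hi')]
      rfl
    set D := degP d₁ d₂ (i + 2)
    rw [degP_succ hi'] at key ih
    have key2 : scal d₁ d₂ x P (i + 1) ^ D *
        hres (D + 1) (degP d₁ d₂ i) (P (i + 1)) (P i) =
        scal d₁ d₂ x P i ^ (D + 1) * hres (D + 1) D (P (i + 1)) (P (i + 2)) := by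
      apply mul_left_cancel₀ hs
      rw [← mul_assoc, ← pow_succ', key]; ring
    have h3 : Associated (scal d₁ d₂ x P i ^ (D + 1) * hres (D + 1) D (P (i + 1)) (P (i + 2)))
        (scal d₁ d₂ x P i ^ (D + 1) * (scal d₁ d₂ x P (i + 1) ^ D *
        hres (degP d₁ d₂ 1) (degP d₁ d₂ 0) (P 1) (P 0))) := by
      rw [← key2, mul_left_comm]
      exact ih.mul_left _
    have h4 := h3.of_mul_left (Associated.refl _) (pow_ne_zero _ (ha i hi'.le))
    rw [degP_succ hi']
    exact (hres_comm_associated _ _ _ _).trans h4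

lemma scal_map {B B' : Type*} [CommRing B] [CommRing B'] (φ : B →+* B') {d₁ d₂ : ℕ}
    {x : ℕ → Fin 2 → B} {P : ℕ → MvPolynomial (Fin 2) B} (j : ℕ) :
    scal d₁ d₂ (fun i t => φ (x i t)) (fun i => MvPolynomial.map φ (P i)) j =
      φ (scal d₁ d₂ x P j) := by
  rcases j with _ | j
  · simp [scal]
  · simp only [scal, map_pow]
    rw [eval_map, ← Function.comp_def φ (x j), ← eval₂_comp]

lemma DivSys.map {B B' : Type*} [CommRing B] [CommRing B'] (φ : B →+* B') {d₁ d₂ : ℕ}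
    {x : ℕ → Fin 2 → B} {P Q : ℕ → MvPolynomial (Fin 2) B} (h : DivSys d₁ d₂ x P Q) :
    DivSys d₁ d₂ (fun i t => φ (x i t)) (fun i => MvPolynomial.map φ (P i))
      (fun i => MvPolynomial.map φ (Q i)) where
  hom i hi := (h.hom i hi).map φ
  quot_hom i hi := (h.quot_hom i hi).imp fun m hm => hm.map φ
  eqn i hi := by
    have := congrArg (MvPolynomial.map φ) (h.eqn i hi)
    simpa [scal_map, linForm] using this

/-! ### Nonvanishing of the scalars for some specialization -/

lemma eval_linForm_self {B : Type*} [CommRing B] (x : Fin 2 → B) : eval x (linForm x) = 0 := by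
  simp [linForm, mul_comm]

lemma prime_linForm {K : Type*} [Field K] {x : Fin 2 → K} (hx : x ≠ 0) : Prime (linForm x) := by
  have c0 : coeff (Finsupp.single 0 1) (linForm x) = - x 1 := by
    simp [linForm, coeff_C_mul, coeff_X, Finsupp.single_left_inj]
  have c1 : coeff (Finsupp.single 1 1) (linForm x) = x 0 := by
    simp [linForm, coeff_C_mul, coeff_X, Finsupp.single_left_inj]
  have h0 : linForm x ≠ 0 := by
    intro h
    apply hx
    rw [h, coeff_zero] at c0 c1
    ext i; fin_cases i
    · exact c1.symm
    · simpa using c0.symm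
  refine (irreducible_of_totalDegree_eq_one ((isHomogeneous_linForm x).totalDegree h0) ?_).prime
  intro y hy
  rw [isUnit_iff_ne_zero]
  rintro rfl
  apply h0
  ext d
  simpa using hy d

/-- A form not vanishing at `x` is coprime to the linear form of `x`. -/
lemma dvd_of_dvd_linForm_pow_mul {K : Type*} [Field K] {x : Fin 2 → K} (hx : x ≠ 0)
    {P R : MvPolynomial (Fin 2) K} (hP : eval x P ≠ 0) {e : ℕ} (h : P ∣ linForm x ^ e * R) :
    P ∣ R := by
  have hrel : IsRelPrime P (linForm x ^ e) := by
    refine IsRelPrime.pow_right ?_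
    refine IsRelPrime.symm ((prime_linForm hx).irreducible.isRelPrime_iff_not_dvd.2 ?_)
    rintro ⟨S, rfl⟩
    exact hP (by rw [map_mul, eval_linForm_self, zero_mul])
  exact hrel.dvd_of_dvd_mul_left h

lemma eq_zero_of_dvd_of_lt {K : Type*} [Field K] {P R : MvPolynomial (Fin 2) K} {m n : ℕ}
    (hP : P.IsHomogeneous m) (hR : R.IsHomogeneous n) (hmn : n < m) (h : P ∣ R) : R = 0 := by
  by_contra hR0
  obtain ⟨S, rfl⟩ := h
  have h1 := hR.totalDegree hR0
  rw [totalDegree_mul_of_isDomain (left_ne_zero_of_mul hR0) (right_ne_zero_of_mul hR0),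
    hP.totalDegree (left_ne_zero_of_mul hR0)] at h1
  omega

lemma exists_form_ne_zero {K : Type*} [Field K] [Infinite K] (N : ℕ) (x : ℕ → Fin 2 → K)
    (hx : ∀ i < N, x i ≠ 0) :
    ∃ M : MvPolynomial (Fin 2) K, M.IsHomogeneous 1 ∧ ∀ i < N, eval (x i) M ≠ 0 := by
  classical
  obtain ⟨t, ht⟩ := Infinite.exists_notMem_finset
    ((Finset.range N).image fun i => - x i 0 / x i 1)
  refine ⟨X 0 + C t * X 1, (isHomogeneous_X _ _).add (isHomogeneous_C_mul_X _ _), ?_⟩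
  intro i hi h0
  simp only [map_add, map_mul, eval_X, eval_C] at h0
  by_cases h1 : x i 1 = 0
  · apply hx i hi
    ext j; fin_cases j
    · simpa [h1] using h0
    · exact h1
  · apply ht
    refine Finset.mem_image.2 ⟨i, Finset.mem_range.2 hi, ?_⟩
    rw [div_eq_iff h1]
    linear_combination -h0

/-- If `V` vanishes at none of the given points, some form `V * S + R` vanishes at none of them: take
`S = t M ^ (n - m)` with `M` linear and `t` outside a finite set. -/
lemma exists_combination_ne_zero {K : Type*} [Field K] [Infinite K] {N : ℕ} {x : ℕ → Fin 2 → K}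
    (hx : ∀ i < N, x i ≠ 0) {V R : MvPolynomial (Fin 2) K} {m n : ℕ} (hmn : m ≤ n)
    (hV : V.IsHomogeneous m) (hV0 : ∀ i < N, eval (x i) V ≠ 0) (hR : R.IsHomogeneous n) :
    ∃ S, (V * S + R).IsHomogeneous n ∧ ∀ i < N, eval (x i) (V * S + R) ≠ 0 := by
  classical
  obtain ⟨M, hM, hM0⟩ := exists_form_ne_zero N x hx
  obtain ⟨t, ht⟩ := Infinite.exists_notMem_finset
    ((Finset.range N).image fun i => - eval (x i) R / eval (x i) (V * M ^ (n - m)))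
  refine ⟨C t * M ^ (n - m), ?_, ?_⟩
  · have := hV.mul ((hM.pow (n - m)).C_mul t)
    rw [one_mul, Nat.add_sub_cancel' hmn] at this
    exact this.add hR
  · intro i hi h0
    have h1 : eval (x i) (V * M ^ (n - m)) ≠ 0 := by
      rw [map_mul, map_pow]
      exact mul_ne_zero (hV0 i hi) (pow_ne_zero _ (hM0 i hi))
    apply ht
    refine Finset.mem_image.2 ⟨i, Finset.mem_range.2 hi, ?_⟩
    rw [div_eq_iff h1]
    simp only [map_add, map_mul, eval_C] at h0 ⊢
    linear_combination -h0

/-- A division can be run backwards: consecutive terms `V`, `U`, with `V` vanishing at no point, are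
reached, up to scalars, by every division system starting from a suitable pair `(G, F)`, and all its
scalars up to that stage are nonzero. The induction replaces `(V, U)` by `(V * S + L ^ e * U, V)`;
the remainder is then determined because `V` is coprime to `L` and has larger degree than `U`. -/
lemma exists_start {K : Type*} [Field K] [Infinite K] {d₁ d₂ : ℕ} (hd : d₁ < d₂)
    {x : ℕ → Fin 2 → K} (hx : ∀ i < d₁, x i ≠ 0) (i : ℕ) (hi : i ≤ d₁)
    (V U : MvPolynomial (Fin 2) K) (hV : V.IsHomogeneous (degP d₁ d₂ i))
    (hV0 : ∀ j < d₁, eval (x j) V ≠ 0) (hU : U.IsHomogeneous (degP d₁ d₂ (i + 1))) :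
    ∃ G F : MvPolynomial (Fin 2) K, G.IsHomogeneous d₂ ∧ F.IsHomogeneous d₁ ∧
      ∀ P Q, DivSys d₁ d₂ x P Q → P 0 = G → P 1 = F →
        (∀ j ≤ i, scal d₁ d₂ x P j ≠ 0) ∧
        ∃ c c' : K, c ≠ 0 ∧ c' ≠ 0 ∧ P i = C c * V ∧ P (i + 1) = C c' * U := by
  induction i generalizing V U with
  | zero =>
    refine ⟨V, U, hV, hU, fun P Q h h0 h1 => ⟨?_, 1, 1, one_ne_zero, one_ne_zero, ?_, ?_⟩⟩
    · intro j hj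
      obtain rfl : j = 0 := by omega
      simp [scal]
    · simpa using h0
    · simpa using h1
  | succ i ih =>
    have hi' : i < d₁ := hi
    have hR : (linForm (x i) ^ expo d₁ d₂ i * U).IsHomogeneous (degP d₁ d₂ i) := by
      have := ((isHomogeneous_linForm (x i)).pow (expo d₁ d₂ i)).mul hU
      rwa [one_mul, add_comm (expo d₁ d₂ i), ← degP_add_expo hd hi'] at this
    obtain ⟨S, hW, hW0⟩ := exists_combination_ne_zero hx (degP_le hd) hV hV0 hR
    obtain ⟨G, F, hG, hF, H⟩ := ih hi'.le _ V hW hW0 hV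
    refine ⟨G, F, hG, hF, fun P Q h h0 h1 => ?_⟩
    obtain ⟨hs, c, c', hc, hc', hPi, hPi1⟩ := H P Q h h0 h1
    have hs1 : scal d₁ d₂ x P (i + 1) ≠ 0 := by
      rw [scal, hPi1, map_mul, eval_C]
      exact pow_ne_zero _ (mul_ne_zero hc' (hV0 i hi'))
    have hsi := hs i le_rfl
    set a := scal d₁ d₂ x P (i + 1)
    set b := scal d₁ d₂ x P i
    refine ⟨fun j hj => ?_, c', a * c / b, hc', div_ne_zero (mul_ne_zero hs1 hc) hsi, hPi1, ?_⟩
    · rcases Nat.lt_or_eq_of_le hj with hj | rfl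
      · exact hs j (by omega)
      · exact hs1
    have hdvd : V ∣ linForm (x i) ^ expo d₁ d₂ i * (C (a * c / b) * U - P (i + 2)) := by
      have he := h.eqn i hi'
      rw [hPi, hPi1] at he
      have hb : (C b * C b⁻¹ : MvPolynomial (Fin 2) K) = 1 := by
        rw [← C_mul, mul_inv_cancel₀ hsi, C_1]
      refine ⟨C b⁻¹ * (C c' * Q i - C (a * c) * S), ?_⟩
      rw [div_eq_mul_inv, C_mul, C_mul]
      rw [show scal d₁ d₂ x P (i + 1) = a from rfl, show scal d₁ d₂ x P i = b from rfl] at he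
      linear_combination C b⁻¹ * he + (linForm (x i) ^ expo d₁ d₂ i * P (i + 2)) * hb
    have h3 := dvd_of_dvd_linForm_pow_mul (hx i hi') (hV0 i hi') hdvd
    refine (sub_eq_zero.1 (eq_zero_of_dvd_of_lt hV ((hU.C_mul _).sub (h.hom (i + 2) (by omega)))
      ?_ h3)).symm
    have := degP_succ (d₂ := d₂) hi'
    show degP d₁ d₂ (i + 2) < degP d₁ d₂ (i + 1)
    omega

/-- Some pair of forms makes all the scalars of its division systems nonzero. It is obtained by
running the division backwards from a form vanishing at none of the points, as term of index `d₁`,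
followed by the remainder `0`. -/
lemma exists_scal_ne_zero {K : Type*} [Field K] [Infinite K] {d₁ d₂ : ℕ} (hd : d₁ < d₂)
    {x : ℕ → Fin 2 → K} (hx : ∀ i < d₁, x i ≠ 0) :
    ∃ G F : MvPolynomial (Fin 2) K, G.IsHomogeneous d₂ ∧ F.IsHomogeneous d₁ ∧
      ∀ P Q, DivSys d₁ d₂ x P Q → P 0 = G → P 1 = F → ∀ j ≤ d₁, scal d₁ d₂ x P j ≠ 0 := by
  obtain ⟨V, hV, hV0⟩ := exists_combination_ne_zero hx (Nat.zero_le (degP d₁ d₂ d₁))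
    (isHomogeneous_one _ _) (by simp) (isHomogeneous_zero _ _ _)
  obtain ⟨G, F, hG, hF, H⟩ := exists_start hd hx d₁ le_rfl _ 0 hV hV0 (isHomogeneous_zero _ _ _)
  exact ⟨G, F, hG, hF, fun P Q h h0 h1 => (H P Q h h0 h1).1⟩

/-! ### Resultants and common divisors -/

lemma natDegree_dehom_lt_of_X_dvd {K : Type*} [Field K] {P : MvPolynomial (Fin 2) K} {m : ℕ}
    (hP : P.IsHomogeneous m) (hm : 0 < m) (hX : X 1 ∣ P) : (dehom P).natDegree < m := by
  have h0 : (dehom P).coeff m = 0 := by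
    obtain ⟨S, rfl⟩ := hX
    rw [coeff_dehom hP]; simp
  refine lt_of_le_of_ne (natDegree_dehom_le hP) fun h => ?_
  rw [← h, Polynomial.coeff_natDegree, Polynomial.leadingCoeff_eq_zero] at h0
  rw [h0, Polynomial.natDegree_zero] at h
  omega

lemma X_dvd_of_natDegree_dehom_lt {K : Type*} [Field K] {P : MvPolynomial (Fin 2) K} {m : ℕ}
    (hP : P.IsHomogeneous m) (h : (dehom P).natDegree < m) : X 1 ∣ P := by
  rw [← homogenize_dehom hP]
  obtain ⟨m, rfl⟩ : ∃ n, m = n + 1 := ⟨m - 1, by omega⟩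
  rw [← mul_one (dehom P), Polynomial.homogenize_mul _ _ (Nat.lt_succ_iff.1 h)
    (n := 1) (by simp)]
  simp

lemma homogenize_dvd_of_dvd_dehom {K : Type*} [Field K] {P : MvPolynomial (Fin 2) K} {m : ℕ}
    (hP : P.IsHomogeneous m) (hP0 : P ≠ 0) {g : Polynomial K} (h : g ∣ dehom P) :
    g.homogenize g.natDegree ∣ P := by
  obtain ⟨s, hs⟩ := h
  have h0 : dehom P ≠ 0 := by
    intro h0
    apply hP0
    rw [← homogenize_dehom hP, h0, Polynomial.homogenize_zero]
  have hle := natDegree_dehom_le hP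
  rw [hs] at h0 hle
  rw [Polynomial.natDegree_mul (left_ne_zero_of_mul h0) (right_ne_zero_of_mul h0)] at hle
  rw [← homogenize_dehom hP, hs, ← Nat.add_sub_cancel' (Nat.le_of_add_right_le hle),
    Polynomial.homogenize_mul _ _ le_rfl (by omega)]
  exact dvd_mul_right _ _

/-- The resultant of two nonzero forms vanishes if and only if they have a nonunit common divisor. A
common zero at infinity corresponds to the divisor `X 1`, a drop of both degrees after
dehomogenization. -/
lemma hres_eq_zero_iff {K : Type*} [Field K] {F G : MvPolynomial (Fin 2) K} {m n : ℕ}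
    (hm : 0 < m) (hn : 0 < n) (hF : F.IsHomogeneous m) (hG : G.IsHomogeneous n)
    (hF0 : F ≠ 0) (hG0 : G ≠ 0) :
    hres m n F G = 0 ↔ ∃ D, D ∣ F ∧ D ∣ G ∧ ¬ IsUnit D := by
  classical
  have hp := natDegree_dehom_le hF
  have hq := natDegree_dehom_le hG
  constructor
  · intro h
    by_cases hlt : (dehom F).natDegree < m ∧ (dehom G).natDegree < n
    · exact ⟨X 1, X_dvd_of_natDegree_dehom_lt hF hlt.1, X_dvd_of_natDegree_dehom_lt hG hlt.2,
        X_prime.not_isUnit⟩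
    -- one of the degrees does not drop, so the actual degrees may be used in the resultant
    have h0 : Polynomial.resultant (dehom F) (dehom G) = 0 := by
      have lc : ∀ {P : MvPolynomial (Fin 2) K} {m : ℕ}, P.IsHomogeneous m → P ≠ 0 →
          (dehom P).leadingCoeff ≠ 0 := by
        intro P m hP hP0 h0
        rw [Polynomial.leadingCoeff_eq_zero] at h0
        apply hP0
        rw [← homogenize_dehom hP, h0, Polynomial.homogenize_zero]
      rw [hres] at h
      rw [not_and_or, not_lt, not_lt] at hlt
      rcases hlt with hlt | hlt
      · obtain rfl := le_antisymm hlt hp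
        obtain ⟨c, rfl⟩ := Nat.exists_eq_add_of_le hq
        rw [Polynomial.resultant_add_right_deg _ _ _ _ _ le_rfl] at h
        exact (mul_eq_zero.1 h).resolve_left (pow_ne_zero _ (lc hF hF0))
      · obtain rfl := le_antisymm hlt hq
        obtain ⟨c, rfl⟩ := Nat.exists_eq_add_of_le hp
        rw [Polynomial.resultant_add_left_deg _ _ _ _ _ le_rfl] at h
        exact (mul_eq_zero.1 h).resolve_left (mul_ne_zero (by simp) (pow_ne_zero _ (lc hG hG0)))
    have hnc := (Polynomial.resultant_eq_zero_iff.1 h0).2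
    rw [← EuclideanDomain.gcd_isUnit_iff] at hnc
    refine ⟨_, homogenize_dvd_of_dvd_dehom hF hF0 (EuclideanDomain.gcd_dvd_left _ _),
      homogenize_dvd_of_dvd_dehom hG hG0 (EuclideanDomain.gcd_dvd_right (dehom F) _), fun hu => ?_⟩
    apply hnc
    have := hu.map (dehom (B := K))
    rwa [dehom, Polynomial.aeval_homogenize_X_one _ le_rfl] at this
  · rintro ⟨D, hDF, hDG, hD⟩
    by_contra hres0
    obtain ⟨a, b, ha, hb, hab⟩ := Polynomial.exists_mul_add_mul_eq_C_resultant
      (dehom F) (dehom G) hp hq (Or.inl hm.ne')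
    have habH := congrArg (fun p => Polynomial.homogenize p (m + n)) hab
    simp only [Polynomial.homogenize_add, Polynomial.homogenize_C] at habH
    rw [Polynomial.homogenize_mul _ _ hp (Polynomial.natDegree_le_of_degree_le ha.le),
      add_comm m n, Polynomial.homogenize_mul _ _ hq (Polynomial.natDegree_le_of_degree_le hb.le),
      homogenize_dehom hF, homogenize_dehom hG] at habH
    -- the homogenized Bézout identity gives `F * a + G * b = Res * X 1 ^ (m + n)`
    have hDX : D ∣ X 1 ^ (n + m) := by
      have h1 := dvd_add (hDF.mul_right (a.homogenize n)) (hDG.mul_right (b.homogenize m))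
      rw [habH] at h1
      refine (IsUnit.dvd_mul_left ?_).1 h1
      exact (isUnit_iff_ne_zero.2 hres0).map C
    obtain ⟨j, -, hj⟩ := (dvd_prime_pow X_prime _).1 hDX
    have hj0 : j ≠ 0 := by
      rintro rfl
      rw [pow_zero, associated_one_iff_isUnit] at hj
      exact hD hj
    have hXD : X 1 ∣ D := (dvd_pow_self _ hj0).trans hj.symm.dvd
    exact hres0 (Polynomial.resultant_eq_zero_of_lt_lt _ _ _ _
      (natDegree_dehom_lt_of_X_dvd hF hm (hXD.trans hDF))
      (natDegree_dehom_lt_of_X_dvd hG hn (hXD.trans hDG)))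

/-! ### The generic forms over the ring of coefficients -/

/-- Regarding elements of `A` as polynomials in `X₀, X₁` with coefficients in `k[f, g]`, the first
component of the tridegree becomes the degree. -/
lemma sumAlg_isHomogeneous {P : MvPolynomial Avars k} {m : ℕ × ℕ × ℕ}
    (hP : IsWeightedHomogeneous wA P m) :
    (sumAlgEquiv k (Fin 2) (ℕ ⊕ ℕ) P).IsHomogeneous m.1 := by
  rw [P.as_sum, map_sum]
  refine IsHomogeneous.sum _ _ _ fun d hd => ?_
  have hw : Finsupp.weight wA d = m := hP (mem_support_iff.1 hd)
  have h1 : m.1 = ∑ i ∈ d.support, d i * (wA i).1 := by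
    rw [← hw, Finsupp.weight_apply, Finsupp.sum, Prod.fst_sum]
    rfl
  rw [monomial_eq, map_mul, h1, ← zero_add (∑ i ∈ d.support, d i * (wA i).1), Finsupp.prod,
    map_prod]
  refine IsHomogeneous.mul ?_ (IsHomogeneous.prod _ _ _ ?_)
  · rw [sumAlgEquiv_C_inl]
    exact isHomogeneous_C _ _
  · rintro (i | i) -
    · rw [map_pow, sumAlgEquiv_X_inl]
      simpa [wA] using (isHomogeneous_X _ i).pow (d (Sum.inl i))
    · rw [map_pow, sumAlgEquiv_X_inr, ← C_pow]
      have : d (Sum.inr i) * (wA (Sum.inr i)).1 = 0 := by rcases i with i | i <;> simp [wA]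
      rw [this]
      exact isHomogeneous_C _ _

/-- The point `(a, b)`, viewed over the ring of coefficients of the generic forms. -/
def pt (a b : k) : Fin 2 → MvPolynomial (ℕ ⊕ ℕ) k := fun t => C (![a, b] t)

lemma sumAlg_evalXY (a b : k) (P : MvPolynomial Avars k) :
    sumAlgEquiv k (Fin 2) (ℕ ⊕ ℕ) (evalXY k a b P) =
      C (eval (pt k a b) (sumAlgEquiv k (Fin 2) (ℕ ⊕ ℕ) P)) := by
  induction P using MvPolynomial.induction_on with
  | C c => simp [evalXY, sumAlgEquiv_C_inl]
  | add P Q hP hQ => simp [hP, hQ]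
  | mul_X P i hP =>
    rw [map_mul, map_mul, hP, map_mul, map_mul, map_mul]
    congr 1
    rcases i with i | i
    · fin_cases i <;> simp [evalXY, pt, sumAlgEquiv_C_inl, sumAlgEquiv_X_inl]
    · simp [evalXY, sumAlgEquiv_X_inr]

lemma sumAlg_Lform (a b : k) :
    sumAlgEquiv k (Fin 2) (ℕ ⊕ ℕ) (Lform k a b) = linForm (pt k a b) := by
  simp [Lform, linForm, XA, pt, sumAlgEquiv_C_inl, sumAlgEquiv_X_inl]

lemma isWeightedHomogeneous_fgen (d₁ : ℕ) : IsWeightedHomogeneous wA (fgen k d₁) (d₁, 1, 0) := by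
  refine IsWeightedHomogeneous.sum _ _ _ fun j hj => ?_
  have hj := Nat.lt_succ_iff.1 (Finset.mem_range.1 hj)
  have := (((isWeightedHomogeneous_X k wA (Sum.inr (Sum.inl j))).mul
    ((isWeightedHomogeneous_X k wA (Sum.inl 0)).pow (d₁ - j))).mul
    ((isWeightedHomogeneous_X k wA (Sum.inl 1)).pow j))
  rwa [show _ + _ = _ from Prod.ext (by simp [wA, hj]) (by simp [wA]) (y := (d₁, 1, 0))] at this

lemma isWeightedHomogeneous_ggen (d₂ : ℕ) : IsWeightedHomogeneous wA (ggen k d₂) (d₂, 0, 1) := by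
  refine IsWeightedHomogeneous.sum _ _ _ fun j hj => ?_
  have hj := Nat.lt_succ_iff.1 (Finset.mem_range.1 hj)
  have := (((isWeightedHomogeneous_X k wA (Sum.inr (Sum.inr j))).mul
    ((isWeightedHomogeneous_X k wA (Sum.inl 0)).pow (d₂ - j))).mul
    ((isWeightedHomogeneous_X k wA (Sum.inl 1)).pow j))
  rwa [show _ + _ = _ from Prod.ext (by simp [wA, hj]) (by simp [wA]) (y := (d₂, 0, 1))] at this

/-- The sequence `g, f, r₀, r₁, …`, with coefficients in the polynomial ring in the `f_j` and
`g_j`. -/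
def remSeq (d₁ d₂ : ℕ) (r : ℕ → MvPolynomial Avars k) :
    ℕ → MvPolynomial (Fin 2) (MvPolynomial (ℕ ⊕ ℕ) k)
  | 0 => sumAlgEquiv k (Fin 2) (ℕ ⊕ ℕ) (ggen k d₂)
  | 1 => sumAlgEquiv k (Fin 2) (ℕ ⊕ ℕ) (fgen k d₁)
  | i + 2 => sumAlgEquiv k (Fin 2) (ℕ ⊕ ℕ) (r i)

/-- The given division system, regarded over `k[f, g]`, is one in the renumbered sense. -/
lemma divSys_remSeq {d₁ d₂ : ℕ} (hd₁ : 1 ≤ d₁) {lam mu : ℕ → k}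
    {r q : ℕ → MvPolynomial Avars k} (h : IsDivisionSystem k d₁ d₂ lam mu (d₁ - 1) r q) :
    DivSys d₁ d₂ (fun i => pt k (lam i) (mu i)) (remSeq k d₁ d₂ r)
      (fun i => sumAlgEquiv k (Fin 2) (ℕ ⊕ ℕ) (q i)) := by
  obtain ⟨hr, hq, h0, h1, h2⟩ := h
  refine ⟨?_, fun i hi => ?_, ?_⟩
  · rintro (_ | _ | i) hi
    · exact sumAlg_isHomogeneous k (isWeightedHomogeneous_ggen k d₂)
    · exact sumAlg_isHomogeneous k (isWeightedHomogeneous_fgen k d₁)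
    · have := sumAlg_isHomogeneous k (hr i (by omega))
      rwa [show degP d₁ d₂ (i + 2) = d₁ - 1 - i by simp only [degP]; omega]
  · obtain ⟨m, hm⟩ := hq i (by omega)
    exact ⟨m.1, sumAlg_isHomogeneous k hm⟩
  · rintro (_ | _ | i) hi
    · have := congrArg (sumAlgEquiv k (Fin 2) (ℕ ⊕ ℕ)) h0
      simp only [map_mul, map_add, map_pow, sumAlg_evalXY, sumAlg_Lform] at this
      simp only [scal, C_1, one_mul, map_pow]
      exact this
    · have := congrArg (sumAlgEquiv k (Fin 2) (ℕ ⊕ ℕ)) (h1 (by omega))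
      simp only [map_mul, map_add, map_pow, sumAlg_evalXY, sumAlg_Lform, mul_assoc] at this
      simp only [scal, map_pow]
      exact this
    · have := congrArg (sumAlgEquiv k (Fin 2) (ℕ ⊕ ℕ)) (h2 (i + 2) (by omega) (by omega))
      simp only [map_mul, map_add, map_pow, sumAlg_evalXY, sumAlg_Lform, mul_assoc] at this
      simp only [scal, map_pow]
      exact this

/-! ### Specialization -/

/-- Specialization of the generic coefficients to those of `F` and `G`. -/
def specFG (d₁ d₂ : ℕ) (F G : MvPolynomial (Fin 2) k) : MvPolynomial (ℕ ⊕ ℕ) k →ₐ[k] k :=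
  aeval (Sum.elim (fun j => coeff (Finsupp.single 0 (d₁ - j) + Finsupp.single 1 j) F)
    (fun j => coeff (Finsupp.single 0 (d₂ - j) + Finsupp.single 1 j) G))

lemma map_specFG_sumAlg (d₁ d₂ : ℕ) (F G : MvPolynomial (Fin 2) k) (P : MvPolynomial Avars k) :
    MvPolynomial.map (specFG k d₁ d₂ F G : MvPolynomial (ℕ ⊕ ℕ) k →+* k)
      (sumAlgEquiv k (Fin 2) (ℕ ⊕ ℕ) P) = evalFG k d₁ d₂ F G P := by
  induction P using MvPolynomial.induction_on with
  | C c => simp [evalFG, sumAlgEquiv_C_inl]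
  | add P Q hP hQ => simp only [map_add, hP, hQ]
  | mul_X P i hP =>
    rw [map_mul, map_mul, hP, map_mul]
    congr 1
    rcases i with i | i | i <;>
      simp [evalFG, specFG, sumAlgEquiv_X_inl, sumAlgEquiv_X_inr]

lemma sum_coeff_binary {G : MvPolynomial (Fin 2) k} {n : ℕ} (hG : G.IsHomogeneous n) :
    ∑ j ∈ Finset.range (n + 1), C (coeff (Finsupp.single 0 (n - j) + Finsupp.single 1 j) G) *
      X 0 ^ (n - j) * X 1 ^ j = G := by
  classical
  have e : ∀ (c : k) (a b : ℕ), (C c * X 0 ^ a * X 1 ^ b : MvPolynomial (Fin 2) k) =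
      monomial (Finsupp.single 0 a + Finsupp.single 1 b) c := by
    intro c a b
    rw [C_mul_X_pow_eq_monomial, X_pow_eq_monomial, monomial_mul, mul_one]
  simp only [e]
  ext d
  rw [coeff_sum]
  simp only [coeff_monomial]
  by_cases hd : d.degree = n
  · rw [Finsupp.degree_eq_sum, Fin.sum_univ_two] at hd
    have hdd : Finsupp.single 0 (n - d 1) + Finsupp.single 1 (d 1) = d := by
      ext t
      fin_cases t <;> simp; omega
    rw [Finset.sum_eq_single (d 1)]
    · rw [if_pos hdd, hdd]
    · intro j _ hj
      rw [if_neg]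
      rintro rfl
      simp at hj
    · intro hj
      exact absurd (Finset.mem_range.2 (by omega)) hj
  · rw [hG.coeff_eq_zero hd]
    refine Finset.sum_eq_zero fun j hj => if_neg ?_
    rintro rfl
    apply hd
    have := Finset.mem_range.1 hj
    rw [Finsupp.degree_eq_sum, Fin.sum_univ_two]
    simp; omega

lemma evalFG_fgen {d₁ : ℕ} (d₂ : ℕ) {F : MvPolynomial (Fin 2) k} (G : MvPolynomial (Fin 2) k)
    (hF : F.IsHomogeneous d₁) : evalFG k d₁ d₂ F G (fgen k d₁) = F := by
  conv_rhs => rw [← sum_coeff_binary k hF]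
  simp [evalFG, fgen, fA, XA]

lemma evalFG_ggen (d₁ : ℕ) {d₂ : ℕ} (F : MvPolynomial (Fin 2) k) {G : MvPolynomial (Fin 2) k}
    (hG : G.IsHomogeneous d₂) : evalFG k d₁ d₂ F G (ggen k d₂) = G := by
  conv_rhs => rw [← sum_coeff_binary k hG]
  simp [evalFG, ggen, gA, XA]

lemma hres_map {B B' : Type*} [CommRing B] [CommRing B'] (φ : B →+* B') (m n : ℕ)
    (P Q : MvPolynomial (Fin 2) B) :
    hres m n (MvPolynomial.map φ P) (MvPolynomial.map φ Q) = φ (hres m n P Q) := by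
  have h : ∀ P : MvPolynomial (Fin 2) B,
      dehom (MvPolynomial.map φ P) = (dehom P).map φ := by
    intro P
    induction P using MvPolynomial.induction_on with
    | C c => simp [dehom]
    | add P Q hP hQ => simp [hP, hQ]
    | mul_X P i hP =>
      rw [map_mul, map_mul, hP, map_mul, Polynomial.map_mul]
      congr 1
      fin_cases i <;> simp [dehom]
  rw [hres, h, h, Polynomial.resultant_map_map, hres]

/-- The scalars of a division system for the generic forms do not vanish, since they do not
vanish after a suitable specialization. -/
lemma scal_remSeq_ne_zero [Infinite k] {d₁ d₂ : ℕ} (hd₁ : 1 ≤ d₁) (hd : d₁ < d₂)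
    {lam mu : ℕ → k} (hlm : ∀ u ≤ d₁ - 1, (lam u, mu u) ≠ (0, 0))
    {r q : ℕ → MvPolynomial Avars k} (h : IsDivisionSystem k d₁ d₂ lam mu (d₁ - 1) r q)
    {i : ℕ} (hi : i ≤ d₁) :
    scal d₁ d₂ (fun i => pt k (lam i) (mu i)) (remSeq k d₁ d₂ r) i ≠ 0 := by
  have hx : ∀ i < d₁, ![lam i, mu i] ≠ 0 := by
    intro i hi h0
    apply hlm i (by omega)
    have e0 := congrFun h0 0
    have e1 := congrFun h0 1
    simp at e0 e1
    rw [e0, e1]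
  obtain ⟨G, F, hG, hF, H⟩ := exists_scal_ne_zero hd hx
  have hm := (divSys_remSeq k hd₁ h).map (specFG k d₁ d₂ F G : MvPolynomial (ℕ ⊕ ℕ) k →+* k)
  have hpt : (fun i t => (specFG k d₁ d₂ F G : MvPolynomial (ℕ ⊕ ℕ) k →+* k)
      (pt k (lam i) (mu i) t)) = fun i => ![lam i, mu i] := by
    funext i t
    simp [pt, specFG]
  have h3 := H _ _ (hpt ▸ hm) (by rw [remSeq, map_specFG_sumAlg, evalFG_ggen k d₁ F hG])
    (by rw [remSeq, map_specFG_sumAlg, evalFG_fgen k d₂ G hF]) i hi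
  intro h0
  rw [← hpt, scal_map, h0, map_zero] at h3
  exact h3 rfl

/-- Let `(r_i, q_i)_{0 ≤ i ≤ d₁-1}` be a division system up to level `d₁-1`.
Then for all nonzero binary forms `F, G` of degrees `d₁` and `d₂`, the evaluation of
`r_{d₁-1}` at `(F, G)` (a constant, since `r_{d₁-1}` has degree `0` in `(X₀,X₁)`) is zero if
and only if `F` and `G` have a common divisor which is not a unit. -/
theorem statement8 [IsAlgClosed k] (d₁ d₂ : ℕ) (hd₁ : 1 ≤ d₁) (hd : d₁ < d₂)
    (lam mu : ℕ → k) (hlm : ∀ u ≤ d₁ - 1, (lam u, mu u) ≠ (0, 0))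
    (r q : ℕ → MvPolynomial Avars k)
    (hds : IsDivisionSystem k d₁ d₂ lam mu (d₁ - 1) r q)
    (F G : MvPolynomial (Fin 2) k) (hF0 : F ≠ 0) (hG0 : G ≠ 0)
    (hF : F.IsHomogeneous d₁) (hG : G.IsHomogeneous d₂) :
    evalFG k d₁ d₂ F G (r (d₁ - 1)) = 0 ↔
      ∃ D : MvPolynomial (Fin 2) k, D ∣ F ∧ D ∣ G ∧ ¬ IsUnit D := by
  have := IsAlgClosed.instInfinite (K := k)
  have hD := divSys_remSeq k hd₁ hds
  set φ : MvPolynomial (ℕ ⊕ ℕ) k →+* k := (specFG k d₁ d₂ F G : MvPolynomial (ℕ ⊕ ℕ) k →+* k)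
    with hφ
  have hpt : ∀ i < d₁, pt k (lam i) (mu i) 1 = 0 ∨ IsUnit (pt k (lam i) (mu i) 1) := by
    intro i _
    by_cases h0 : mu i = 0
    · left; simp [pt, h0]
    · right; exact (isUnit_iff_ne_zero.2 h0).map C
  have hA := hD.hres_associated hd hpt
    (fun i hi => scal_remSeq_ne_zero k hd₁ hd hlm hds hi) le_rfl
  -- at the last stage the remainder has degree `0`, so the power of the scalar disappears
  have hdeg : degP d₁ d₂ (d₁ + 1) = 0 := by simp [degP]
  rw [hdeg, pow_zero, one_mul] at hA
  have hB := hA.map φ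
  rw [← hres_map, ← hres_map] at hB
  obtain ⟨e, rfl⟩ : ∃ e, d₁ = e + 1 := ⟨d₁ - 1, by omega⟩
  have hr := (hD.map φ).hom (e + 1 + 1) le_rfl
  simp only [remSeq, hφ, map_specFG_sumAlg, evalFG_fgen k d₂ G hF, evalFG_ggen k (e + 1) F hG]
    at hB hr
  rw [hdeg] at hr
  rw [Nat.add_sub_cancel]
  generalize evalFG k (e + 1) d₂ F G (r e) = R at hB hr ⊢
  have hR := totalDegree_eq_zero_iff_eq_C.1 ((totalDegree_zero_iff_isHomogeneous (p := R)).2 hr)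
  rw [← hres_eq_zero_iff (by omega) (by omega) hF hG hF0 hG0]
  -- a constant `c`, at formal degree `0`, against a form of degree `1` has resultant `c`
  have hB' : Associated (coeff 0 R) (hres (e + 1) d₂ F G) := by
    have h1 : degP (e + 1) d₂ (e + 1) = 1 := by simp [degP]
    change Associated _ (hres (e + 1) d₂ F G) at hB
    convert hB using 1
    rw [h1, hres, Polynomial.resultant_zero_left_deg, pow_one]
    conv_rhs => rw [hR]
    simp [dehom]
  rw [← hB'.eq_zero_iff]
  constructor
  · rintro rfl; simp
  · intro h0; rw [hR, h0, C_0]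

end
end

section
/- Let k be a field, let N ≥ 1 and 1 ≤ d₁ ≤ d₂ be integers, let F, G ∈ k[X₀,…,X_N] be homogeneous polynomials of degrees d₁ and d₂, and let c be the coefficient of the monomial X₀^{d₁} in F; assume c ≠ 0. Then there exists a unique pair (Q,R) with Q ∈ k[X₀,…,X_N] homogeneous of degree d₂−d₁ and R ∈ k[X₀,…,X_N] homogeneous of degree d₂ such that no monomial occurring in R is divisible by X₀^{d₁}, and c^{d₂−d₁+1}·G = Q·F + R. Moreover, R = 0 if and only if F divides G. -/
/-!
Since `c ≠ 0`, the monomial `X₀ ^ d₁` is the largest monomial of `F` for the lexicographic order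
with `X₀` most significant (`lex_degree_eq_single`), and its coefficient is a unit. Multivariate
division by `F` then gives some quotient and remainder, where no monomial of the remainder is
divisible by `X₀ ^ d₁`; passing to homogeneous components gives `Q` and `R` of the right degrees
(`exists_homogeneous_division`).

Uniqueness and the divisibility criterion both come from the degree in `X₀`: it is additive on
products over a domain and is at least `d₁` for `F`, so a multiple of `F` of degree `< d₁` in `X₀`
vanishes (`eq_zero_of_dvd`).
-/

open MvPolynomial

noncomputable section

/-- Among the monomials of a given degree `d`, the power `X₀ ^ d` is lexicographically largest. -/
lemma lex_degree_eq_single {k : Type*} [Field k] {N d : ℕ} {F : MvPolynomial (Fin (N + 1)) k}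
    (hF : F.IsHomogeneous d) (hc : coeff (Finsupp.single 0 d) F ≠ 0) :
    MonomialOrder.lex.degree F = Finsupp.single 0 d := by
  apply MonomialOrder.lex.toSyn.injective
  apply le_antisymm
  · rw [MonomialOrder.degree_le_iff]
    intro m hm
    rw [MonomialOrder.lex_le_iff]
    by_contra! hlt
    rw [Finsupp.Lex.lt_iff] at hlt
    obtain ⟨i, hi, hlt⟩ := hlt
    have hdeg : m.degree = d := by
      rw [Finsupp.degree_eq_weight_one]
      exact hF (mem_support_iff.mp hm)
    rw [Finsupp.degree_eq_sum] at hdeg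
    by_cases h0 : i = 0
    · subst h0
      have h1 := Finset.single_le_sum (f := fun j => m j) (fun _ _ => Nat.zero_le _)
        (Finset.mem_univ (0 : Fin (N + 1)))
      simp at hlt h1
      omega
    · have h1 := Finset.add_le_sum (f := fun j => m j) (fun _ _ => Nat.zero_le _)
        (Finset.mem_univ (0 : Fin (N + 1))) (Finset.mem_univ i) (Ne.symm h0)
      have h2 := hi 0 (Fin.pos_of_ne_zero h0)
      simp [Ne.symm h0] at hlt h1 h2
      omega
  · exact MonomialOrder.le_degree (mem_support_iff.mpr hc)

lemma homogeneousComponent_mul_right {k σ : Type*} [Field k] {d n : ℕ}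
    {F : MvPolynomial σ k} (hF : F.IsHomogeneous d) (h : d ≤ n) (Q : MvPolynomial σ k) :
    homogeneousComponent n (Q * F) = homogeneousComponent (n - d) Q * F := by
  letI : GradedAlgebra (homogeneousSubmodule σ k) := gradedAlgebra
  have := DirectSum.coe_decompose_mul_of_right_mem_of_le (homogeneousSubmodule σ k)
    (a := Q) (n := n) ((mem_homogeneousSubmodule d F).mpr hF) h
  rw [← decomposition.decompose'_apply, ← decomposition.decompose'_apply]
  exact this

lemma exists_homogeneous_division {k : Type*} [Field k] {N d n : ℕ} (hd : d ≤ n)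
    {F G : MvPolynomial (Fin (N + 1)) k} (hF : F.IsHomogeneous d) (hG : G.IsHomogeneous n)
    (hc : coeff (Finsupp.single 0 d) F ≠ 0) :
    ∃ Q R : MvPolynomial (Fin (N + 1)) k, Q.IsHomogeneous (n - d) ∧ R.IsHomogeneous n ∧
      (∀ m ∈ R.support, m 0 < d) ∧ G = Q * F + R := by
  have hdeg := lex_degree_eq_single hF hc
  obtain ⟨Q, R, hQR, -, hR⟩ := MonomialOrder.lex.div_single (b := F)
    (by rw [MonomialOrder.leadingCoeff, hdeg]; exact hc.isUnit) G
  refine ⟨homogeneousComponent (n - d) Q, homogeneousComponent n R,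
    homogeneousComponent_isHomogeneous _ _, homogeneousComponent_isHomogeneous _ _, ?_, ?_⟩
  · intro m hm
    rw [support_homogeneousComponent, Finset.mem_filter] at hm
    have := hR m hm.1
    rw [hdeg, Finsupp.single_le_iff] at this
    omega
  · rw [← homogeneousComponent_mul_right hF hd, ← map_add, ← hQR,
      homogeneousComponent_eq_self hG]

/-- A multiple of `F` has degree at least `d` in `X₀` unless it vanishes. -/
lemma eq_zero_of_dvd {k : Type*} [Field k] {N d : ℕ} {F P : MvPolynomial (Fin (N + 1)) k}
    (hc : coeff (Finsupp.single 0 d) F ≠ 0) (hP : ∀ m ∈ P.support, m 0 < d) (h : F ∣ P) :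
    P = 0 := by
  obtain ⟨S, rfl⟩ := h
  by_contra hne
  have hlt : degreeOf 0 (F * S) < d := by
    obtain ⟨m, hm⟩ := support_nonempty.mpr hne
    exact (degreeOf_lt_iff ((Nat.zero_le _).trans_lt (hP m hm))).mpr hP
  rw [degreeOf_mul_eq (left_ne_zero_of_mul hne) (right_ne_zero_of_mul hne)] at hlt
  have := le_degreeOf_of_mem_support 0 (mem_support_iff.mpr hc)
  simp at this
  omega

/-- formal Euclidean division by a hypersurface equation. Let `k` be a
field, `N ≥ 1`, `1 ≤ d₁ ≤ d₂`, let `F, G ∈ k[X₀,…,X_N]` be homogeneous of degrees `d₁`, `d₂`,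
and let `c` be the coefficient of `X₀^{d₁}` in `F`, assumed nonzero. Then there is a unique
pair `(Q, R)` with `Q` homogeneous of degree `d₂-d₁`, `R` homogeneous of degree `d₂`, no
monomial of `R` divisible by `X₀^{d₁}`, and `c^{d₂-d₁+1}·G = Q·F + R`; moreover `R = 0` if
and only if `F` divides `G`. -/
theorem statement11 (k : Type) [Field k] (N d₁ d₂ : ℕ) (hN : 1 ≤ N)
    (hd₁ : 1 ≤ d₁) (hd : d₁ ≤ d₂)
    (F G : MvPolynomial (Fin (N + 1)) k)
    (hF : F.IsHomogeneous d₁) (hG : G.IsHomogeneous d₂)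
    (c : k) (hc : c = coeff (Finsupp.single 0 d₁) F) (hc0 : c ≠ 0) :
    ∃ Q R : MvPolynomial (Fin (N + 1)) k,
      (Q.IsHomogeneous (d₂ - d₁) ∧ R.IsHomogeneous d₂ ∧
        (∀ m ∈ R.support, m 0 < d₁) ∧
        C c ^ (d₂ - d₁ + 1) * G = Q * F + R) ∧
      (R = 0 ↔ F ∣ G) ∧
      (∀ Q' R' : MvPolynomial (Fin (N + 1)) k,
        Q'.IsHomogeneous (d₂ - d₁) → R'.IsHomogeneous d₂ →
        (∀ m ∈ R'.support, m 0 < d₁) →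
        C c ^ (d₂ - d₁ + 1) * G = Q' * F + R' → Q' = Q ∧ R' = R) := by
  subst hc
  have hF0 : F ≠ 0 := by
    rintro rfl
    simp at hc0
  set u : MvPolynomial (Fin (N + 1)) k :=
    C (coeff (Finsupp.single 0 d₁) F) ^ (d₂ - d₁ + 1) with hu_def
  have hu : IsUnit u := (hc0.isUnit.map C).pow _
  have huG : (u * G).IsHomogeneous d₂ := by
    rw [hu_def, ← C_pow]
    exact hG.C_mul _
  obtain ⟨Q, R, hQ, hR, hRd, hQR⟩ := exists_homogeneous_division hd hF huG hc0
  refine ⟨Q, R, ⟨hQ, hR, hRd, hQR⟩, ⟨fun h => ?_, fun h => ?_⟩, ?_⟩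
  · rw [← hu.dvd_mul_left, hQR, h, add_zero]
    exact dvd_mul_left F Q
  · refine eq_zero_of_dvd hc0 hRd ?_
    rw [← dvd_add_right (dvd_mul_left F Q), ← hQR]
    exact h.mul_left u
  · intro Q' R' _ _ hRd' hQR'
    have hdiff : (Q - Q') * F = R' - R := by linear_combination hQR' - hQR
    have hR0 : R' - R = 0 := by
      refine eq_zero_of_dvd hc0 (fun m hm => ?_) (hdiff ▸ dvd_mul_left F _)
      rcases Finset.mem_union.mp (support_sub _ R' R hm) with h | h
      exacts [hRd' m h, hRd m h]
    rw [hR0] at hdiff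
    exact ⟨(sub_eq_zero.mp ((mul_eq_zero.mp hdiff).resolve_right hF0)).symm,
      sub_eq_zero.mp hR0⟩

end
end

section
/- Let k be a field, let 1 ≤ d₁ < d₂ and 1 ≤ K ≤ d₁−1 be integers, and let P, L, H ∈ k[X₀,X₁] be homogeneous polynomials of degrees d₁−K, K and d₂−d₁+K respectively, such that every polynomial dividing all three of P, L, H is a unit. Then every homogeneous polynomial T of degree d₂+K can be written T = A·P + B·L + C·H with A, B, C homogeneous of degrees d₂−d₁+2K, d₂ and d₁ respectively. -/
/-!
The statement is a graded Nullstellensatz for finite families of binary forms: if forms `P i` of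
degrees `d i` have no common divisor except units, then every form of degree `n ≥ ∑ i, d i` is a
combination `∑ i, A i * P i` with `A i` homogeneous of degree `n - d i`. For `P, L, H` the sum of
the degrees is exactly `d₂ + K`.

The proof (`exists_combination`) is a Euclidean descent on `∑ i, d i`. A form of degree `m` is
divisible by `X₀` as soon as its `X₁ ^ m` coefficient vanishes (`exists_eq_X_mul`). As `X₀` does
not divide the whole family, some `P i` has nonzero `X₁ ^ (d i)` coefficient; take one of minimal
degree. For another index `j` with `d j > 0`, subtracting a multiple of `P i` from `P j` makes it
divisible by `X₀`; replacing `P j` by the quotient keeps the family coprime and lowers the sum of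
the degrees by one. Likewise the target `T` minus a multiple of `P i` is `X₀` times a form of
degree `n - 1`, to which induction applies. The descent stops when all other members of the family
are constants: then some member is a nonzero constant.
-/

noncomputable section

open MvPolynomial

/-- A binary form of positive degree without pure `X 1`-power term is `X 0` times a form. -/
lemma exists_eq_X_mul {k : Type} [Field k] {n : ℕ} {F : MvPolynomial (Fin 2) k}
    (hF : F.IsHomogeneous (n + 1)) (h0 : coeff (Finsupp.single 1 (n + 1)) F = 0) :
    ∃ Q : MvPolynomial (Fin 2) k, Q.IsHomogeneous n ∧ X 0 * Q = F := by
  refine ⟨F.divMonomial (Finsupp.single 0 1), ?_, ?_⟩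
  · intro m hm
    rw [coeff_divMonomial] at hm
    have := hF hm
    rw [map_add] at this
    simp [Finsupp.weight_apply] at this ⊢
    omega
  · have hd : X 0 ∣ F := by
      rw [X_dvd_iff_modMonomial_eq_zero]
      ext m
      by_cases hm : Finsupp.single 0 1 ≤ m
      · rw [coeff_modMonomial_of_le _ hm, coeff_zero]
      · rw [coeff_modMonomial_of_not_le _ hm, coeff_zero]
        by_contra hne
        have hm0 : m 0 = 0 := by
          rw [Finsupp.single_le_iff] at hm
          omega
        have hdeg := hF hne
        have hm1 : m = Finsupp.single 1 (n + 1) := by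
          rw [Finsupp.weight_apply, Finsupp.sum_fintype _ _ (by simp)] at hdeg
          simp [Fin.sum_univ_two, hm0] at hdeg
          ext i
          fin_cases i
          · simpa using hm0
          · simpa using hdeg
        exact hne (hm1 ▸ h0)
    obtain ⟨Q, rfl⟩ := hd
    rw [X_mul_divMonomial]

/-- Subtracting a multiple of a form `P` with nonzero `X 1 ^ a` coefficient from a form `F` of
degree at least `a` leaves `X 0` times a form. -/
lemma exists_sub_eq_X_mul {k : Type} [Field k] {a n : ℕ} {P F : MvPolynomial (Fin 2) k}
    (hP : P.IsHomogeneous a) (hp : coeff (Finsupp.single 1 a) P ≠ 0)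
    (hF : F.IsHomogeneous (n + 1)) (han : a ≤ n + 1) :
    ∃ G Q : MvPolynomial (Fin 2) k, G.IsHomogeneous (n + 1 - a) ∧ Q.IsHomogeneous n ∧
      X 0 * Q = F - G * P := by
  set G : MvPolynomial (Fin 2) k := monomial (Finsupp.single 1 (n + 1 - a))
    (coeff (Finsupp.single 1 (n + 1)) F / coeff (Finsupp.single 1 a) P) with hGdef
  have hG : G.IsHomogeneous (n + 1 - a) := isHomogeneous_monomial _ (Finsupp.degree_single _ _)
  have hGP : (G * P).IsHomogeneous (n + 1) := by
    have := hG.mul hP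
    rwa [Nat.sub_add_cancel han] at this
  obtain ⟨Q, hQ, hQ'⟩ := exists_eq_X_mul (hF.sub hGP) (by
    have hs : (Finsupp.single 1 (n + 1) : Fin 2 →₀ ℕ)
        = Finsupp.single 1 (n + 1 - a) + Finsupp.single 1 a := by
      rw [← Finsupp.single_add, Nat.sub_add_cancel han]
    have hc : coeff (Finsupp.single 1 (n + 1)) (G * P)
        = coeff (Finsupp.single 1 (n + 1)) F := by
      rw [hs, hGdef, coeff_monomial_mul, ← hs, div_mul_cancel₀ _ hp]
    rw [coeff_sub, hc, sub_self])
  exact ⟨G, Q, hG, hQ, hQ'⟩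

lemma eq_C_of_isHomogeneous_zero {k : Type} [Field k] {P : MvPolynomial (Fin 2) k}
    (hP : P.IsHomogeneous 0) : P = C (coeff 0 P) :=
  totalDegree_eq_zero_iff_eq_C.mp (Nat.le_zero.mp hP.totalDegree_le)

lemma exists_combination_of_constant {k : Type} [Field k] {ι : Type} [Fintype ι] [DecidableEq ι]
    (d : ι → ℕ) (P : ι → MvPolynomial (Fin 2) k) (i : ι) (hdi : d i = 0)
    (hP : (P i).IsHomogeneous (d i)) (hPi : P i ≠ 0) (n : ℕ) (T : MvPolynomial (Fin 2) k)
    (hT : T.IsHomogeneous n) :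
    ∃ A : ι → MvPolynomial (Fin 2) k, (∀ i, (A i).IsHomogeneous (n - d i)) ∧
        T = ∑ i, A i * P i := by
  rw [hdi] at hP
  have hC := eq_C_of_isHomogeneous_zero hP
  have hc : coeff 0 (P i) ≠ 0 := fun h => hPi (by rw [hC, h, C_0])
  refine ⟨Pi.single i (T * C (coeff 0 (P i))⁻¹), fun m => ?_, ?_⟩
  · by_cases hm : m = i
    · subst hm
      rw [Pi.single_eq_same, hdi]
      simpa using hT.mul (isHomogeneous_C (Fin 2) (coeff 0 (P m))⁻¹)
    · rw [Pi.single_eq_of_ne hm]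
      exact isHomogeneous_zero _ _ _
  · rw [Finset.sum_eq_single i (fun m _ hm => by rw [Pi.single_eq_of_ne hm, zero_mul]) (by simp),
      Pi.single_eq_same, mul_assoc]
    conv_rhs => rw [hC]
    rw [coeff_C, if_pos rfl, ← C_mul, inv_mul_cancel₀ hc, C_1, mul_one]

/-- Graded Nullstellensatz for a coprime finite family of binary forms, with the sum of the degrees
as bound. Members of the family may vanish, with any assigned degree. -/
lemma exists_combination {k : Type} [Field k] {ι : Type} [Fintype ι] [DecidableEq ι] (s : ℕ) :
    ∀ (d : ι → ℕ) (P : ι → MvPolynomial (Fin 2) k), ∑ i, d i = s →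
      (∀ i, (P i).IsHomogeneous (d i)) → (∀ D, (∀ i, D ∣ P i) → IsUnit D) →
      ∀ (n : ℕ) (T : MvPolynomial (Fin 2) k), s ≤ n → T.IsHomogeneous n →
      ∃ A : ι → MvPolynomial (Fin 2) k, (∀ i, (A i).IsHomogeneous (n - d i)) ∧
        T = ∑ i, A i * P i := by
  induction s using Nat.strong_induction_on with
  | _ s ih =>
  intro d P hd hP hcop n T hn hT
  -- A member not divisible by `X 0`, of minimal degree.
  have hex : ∃ i, coeff (Finsupp.single 1 (d i)) (P i) ≠ 0 := by
    by_contra! hall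
    refine (X_prime (R := k) (i := (0 : Fin 2))).not_isUnit (hcop _ fun i => ?_)
    have hPi := hP i
    have hci := hall i
    rcases hdi : d i with _ | m
    · rw [hdi] at hPi hci
      rw [Finsupp.single_zero] at hci
      rw [eq_C_of_isHomogeneous_zero hPi, hci, C_0]
      exact dvd_zero _
    · rw [hdi] at hPi hci
      obtain ⟨Q, -, hQ⟩ := exists_eq_X_mul hPi hci
      exact ⟨Q, hQ.symm⟩
  obtain ⟨i, hi, hmin⟩ : ∃ i, coeff (Finsupp.single 1 (d i)) (P i) ≠ 0 ∧
      ∀ j, coeff (Finsupp.single 1 (d j)) (P j) ≠ 0 → d i ≤ d j := by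
    classical
    obtain ⟨i, hi, hm⟩ := Finset.exists_min_image
      (Finset.univ.filter fun i => coeff (Finsupp.single 1 (d i)) (P i) ≠ 0) d
      (by simpa [Finset.filter_nonempty_iff] using hex)
    refine ⟨i, by simpa using hi, fun j hj => hm j (by simpa using hj)⟩
  have hPi0 : P i ≠ 0 := fun h => hi (by rw [h, coeff_zero])
  by_cases hdi : d i = 0
  · exact exists_combination_of_constant d P i hdi (hP i) hPi0 n T hT
  by_cases hj : ∃ j, j ≠ i ∧ d j ≠ 0
  · obtain ⟨j, hji, hdj⟩ := hj
    obtain ⟨m, hm⟩ := Nat.exists_eq_succ_of_ne_zero hdj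
    have hdle : ∀ l, d l ≤ s := fun l => hd ▸ Finset.single_le_sum (by simp) (Finset.mem_univ l)
    have hjn := (hdle j).trans hn
    have hin := (hdle i).trans hn
    obtain ⟨n, rfl⟩ : ∃ n', n = n' + 1 := ⟨n - 1, by omega⟩
    have hPj := hP j
    rw [hm] at hPj
    obtain ⟨G, Q, hG, hQ, hGQ⟩ : ∃ G Q : MvPolynomial (Fin 2) k,
        (G = 0 ∨ d i ≤ d j ∧ G.IsHomogeneous (d j - d i)) ∧ Q.IsHomogeneous m ∧
          X 0 * Q = P j - G * P i := by
      by_cases hcj : coeff (Finsupp.single 1 (d j)) (P j) = 0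
      · rw [hm] at hcj
        obtain ⟨Q, hQ, hXQ⟩ := exists_eq_X_mul hPj hcj
        exact ⟨0, Q, Or.inl rfl, hQ, by simpa using hXQ⟩
      · have hle := hmin j hcj
        obtain ⟨G, Q, hG, hQ, hXQ⟩ := exists_sub_eq_X_mul (hP i) hi hPj (hle.trans_eq hm)
        exact ⟨G, Q, Or.inr ⟨hle, by rwa [hm]⟩, hQ, hXQ⟩
    obtain ⟨E, T', hE, hT', hET⟩ := exists_sub_eq_X_mul (hP i) hi hT hin
    have hsum : ∑ l, Function.update d j m l = s - 1 := by
      have h1 := Finset.sum_update_of_mem (Finset.mem_univ j) d m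
      have h2 := Finset.add_sum_erase Finset.univ d (Finset.mem_univ j)
      rw [Finset.sdiff_singleton_eq_erase] at h1
      omega
    obtain ⟨B, hB, hTB⟩ := ih (s - 1) (by have := hdle j; omega) (Function.update d j m)
      (Function.update P j Q) hsum
      (fun l => by
        by_cases hl : l = j
        · subst hl; simpa using hQ
        · simpa [hl] using hP l)
      (fun D hD => hcop D fun l => by
        by_cases hl : l = j
        · subst hl
          have h1 : D ∣ Q := by simpa using hD l
          have h2 : D ∣ P i := by simpa [hji.symm] using hD i
          have h3 : P l = X 0 * Q + G * P i := by rw [hGQ]; ring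
          rw [h3]
          exact dvd_add (h1.mul_left _) (h2.mul_left _)
        · simpa [hl] using hD l)
      n T' (by omega) hT'
    have hBj : (B j).IsHomogeneous (n - m) := by simpa using hB j
    -- `T = E * P i + X 0 * T'`, and the `j`-th summand of `X 0 * T'` is
    -- `B j * (P j - G * P i)`.
    refine ⟨fun l => (if l = j then B j else X 0 * B l) + if l = i then E - B j * G else 0,
      fun l => ?_, ?_⟩
    · refine IsHomogeneous.add ?_ ?_
      · split_ifs with hl
        · subst hl
          rwa [hm, Nat.succ_eq_add_one, Nat.add_sub_add_right]
        · by_cases hBl : B l = 0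
          · rw [hBl, mul_zero]; exact isHomogeneous_zero _ _ _
          · have h1 := (isHomogeneous_X k (0 : Fin 2)).mul (hB l)
            rw [Function.update_of_ne hl] at h1
            -- Both indices `l` and `j` contribute to the degree sum, so `d l < n + 1`.
            have h2 : d l + d j ≤ s := by
              rw [← hd, ← Finset.add_sum_erase Finset.univ d (Finset.mem_univ l)]
              exact Nat.add_le_add_left (Finset.single_le_sum (f := d) (by simp)
                (Finset.mem_erase.mpr ⟨Ne.symm hl, Finset.mem_univ j⟩)) _
            rwa [show 1 + (n - d l) = n + 1 - d l by omega] at h1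
      · split_ifs with hl
        · subst hl
          refine hE.sub ?_
          rcases hG with rfl | ⟨hle, hG⟩
          · rw [mul_zero]; exact isHomogeneous_zero _ _ _
          · have h1 := hBj.mul hG
            rwa [show n - m + (d j - d l) = n + 1 - d l by omega] at h1
        · exact isHomogeneous_zero _ _ _
    · have hX : X 0 * T' = ∑ l, ((if l = j then B j else X 0 * B l) * P l
          - if l = j then B j * (G * P i) else 0) := by
        rw [hTB, Finset.mul_sum]
        refine Finset.sum_congr rfl fun l _ => ?_
        split_ifs with hl
        · subst hl
          rw [Function.update_self, mul_left_comm, hGQ, mul_sub]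
        · rw [Function.update_of_ne hl, sub_zero, mul_assoc]
      rw [Finset.sum_sub_distrib, Finset.sum_ite_eq' Finset.univ j, if_pos (Finset.mem_univ j)] at hX
      have hs : ∑ l, (if l = i then E - B j * G else 0) * P l = (E - B j * G) * P i := by
        simp
      simp only [add_mul, Finset.sum_add_distrib]
      rw [hs]
      linear_combination hX - hET
  · -- All other members are constants, and vanish since `d i` is positive and minimal.
    push Not at hj
    have hu : IsUnit (P i) := hcop _ fun l => by
      by_cases hl : l = i
      · rw [hl]
      · have hPl := hP l
        have hml := hmin l
        rw [hj l hl] at hPl hml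
        rw [Finsupp.single_zero] at hml
        have hc : coeff 0 (P l) = 0 := by
          by_contra h
          exact hdi (Nat.le_zero.mp (hml h))
        rw [eq_C_of_isHomogeneous_zero hPl, hc, C_0]
        exact dvd_zero _
    obtain ⟨r, -, hr⟩ := isUnit_iff_eq_C_of_isReduced.mp hu
    have h0 : (P i).IsHomogeneous 0 := hr ▸ isHomogeneous_C _ _
    exact absurd ((hP i).inj_right h0 hPi0) hdi

/-- Let `k` be a field, `1 ≤ d₁ < d₂`, `1 ≤ K ≤ d₁-1`, and let
`P, L, H ∈ k[X₀,X₁]` be homogeneous of degrees `d₁-K`, `K` and `d₂-d₁+K`, with every common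
divisor of all three a unit. Then every homogeneous `T` of degree `d₂+K` can be written
`T = A·P + B·L + C·H` with `A, B, C` homogeneous of degrees `d₂-d₁+2K`, `d₂` and `d₁`. -/
theorem statement14 (k : Type) [Field k] (d₁ d₂ K : ℕ) (hd₁ : 1 ≤ d₁) (hd : d₁ < d₂)
    (hK1 : 1 ≤ K) (hK2 : K ≤ d₁ - 1)
    (P L H : MvPolynomial (Fin 2) k)
    (hP : P.IsHomogeneous (d₁ - K)) (hL : L.IsHomogeneous K)
    (hH : H.IsHomogeneous (d₂ - d₁ + K))
    (hcop : ∀ D : MvPolynomial (Fin 2) k, D ∣ P → D ∣ L → D ∣ H → IsUnit D)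
    (T : MvPolynomial (Fin 2) k) (hT : T.IsHomogeneous (d₂ + K)) :
    ∃ A B C : MvPolynomial (Fin 2) k,
      A.IsHomogeneous (d₂ - d₁ + 2 * K) ∧ B.IsHomogeneous d₂ ∧ C.IsHomogeneous d₁ ∧
      T = A * P + B * L + C * H := by
  have hsum : ∑ i, ![d₁ - K, K, d₂ - d₁ + K] i = d₂ + K := by
    simp only [Fin.sum_univ_three, Matrix.cons_val]
    omega
  obtain ⟨A, hA, hTA⟩ := exists_combination (d₂ + K) ![d₁ - K, K, d₂ - d₁ + K] ![P, L, H] hsum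
    (fun i => by fin_cases i <;> simpa) (fun D hD => hcop D (hD 0) (hD 1) (hD 2)) (d₂ + K) T
    le_rfl hT
  refine ⟨A 0, A 1, A 2, ?_, ?_, ?_, by rw [hTA, Fin.sum_univ_three]; rfl⟩
  · convert hA 0 using 1
    simp only [Matrix.cons_val]
    omega
  · convert hA 1 using 1
    simp only [Matrix.cons_val]
    omega
  · convert hA 2 using 1
    simp only [Matrix.cons_val]
    omega

end
end

section
/- Let k be a field, let 1 ≤ d₁ < d₂ and 1 ≤ K ≤ d₁−1 be integers, and let P, L, H ∈ k[X₀,X₁] be nonzero homogeneous polynomials of degrees d₁−K, K and d₂−d₁+K respectively. Let Π be a homogeneous common divisor of P, L, H of degree d, and write P = Π·P′, L = Π·L′, H = Π·H′; assume every polynomial dividing all three of P′, L′, H′ is a unit. Then for all homogeneous A, B, C ∈ k[X₀,X₁] of degrees d₁−K, K and d₂−d₁+K respectively, the following are equivalent: (1) P·L divides A·L + B·P and P·H divides A·H + C·P; (2) there exist a homogeneous polynomial Π′ of degree d and scalars α, β, γ ∈ k with A = Π′·P′ + α·P, B = −Π′·L′ + β·L, and C = −Π′·H′ + γ·H. -/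
/-!
Comparing degrees, `P * L ∣ A * L + B * P` forces `A * L + B * P = c * P * L` with a scalar `c`,
and likewise `A * H + C * P = e * P * H`. Dividing by `Π`, these read
`A * L' = -(B - c * L) * P'` and `A * H' = -(C - e * H) * P'`. So `P'` divides `A * P'`, `A * L'`
and `A * H'`; as `P', L', H'` have trivial gcd in the factorial ring `k[X₀,X₁]`, `P'` divides `A`.
The quotient `A / P'` is the required `Π'`, with `α = 0`, `β = c`, `γ = e`; it is homogeneous of
degree `d` since `(A / P') * P = A * Π` and homogeneity passes to quotients
(`isHomogeneous_of_mul_right`).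
-/

noncomputable section

section Helpers

attribute [local instance] MvPolynomial.gradedAlgebra

/-- The quotient of a homogeneous polynomial by a nonzero homogeneous one is homogeneous. -/
theorem isHomogeneous_of_mul_right {σ k : Type*} [Field k] {Q P : MvPolynomial σ k} {m n : ℕ}
    (hP0 : P ≠ 0) (hP : P.IsHomogeneous n) (h : (Q * P).IsHomogeneous (m + n)) :
    Q.IsHomogeneous m := by
  have key := DirectSum.coe_decompose_mul_add_of_right_mem
    (MvPolynomial.homogeneousSubmodule σ k) (i := m) (a := Q)
    ((MvPolynomial.mem_homogeneousSubmodule n P).2 hP)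
  rw [DirectSum.decompose_of_mem_same _
    ((MvPolynomial.mem_homogeneousSubmodule (m + n) (Q * P)).2 h)] at key
  rw [mul_right_cancel₀ hP0 key]
  exact (MvPolynomial.mem_homogeneousSubmodule _ _).1 (SetLike.coe_mem _)

end Helpers

/-- Under the degree hypotheses, the quotient of `A * L + B * P` by `P * L` is a scalar. -/
theorem exists_scalar_of_mul_dvd {σ k : Type*} [Field k] {P L A B : MvPolynomial σ k} {m n : ℕ}
    (hP0 : P ≠ 0) (hL0 : L ≠ 0) (hP : P.IsHomogeneous m) (hL : L.IsHomogeneous n)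
    (hA : A.IsHomogeneous m) (hB : B.IsHomogeneous n) (h : P * L ∣ A * L + B * P) :
    ∃ c : k, A * L + B * P = MvPolynomial.C c * (P * L) := by
  obtain ⟨q, hq⟩ := h
  rw [mul_comm _ q] at hq
  have hhom : (q * (P * L)).IsHomogeneous (0 + (m + n)) := by
    rw [← hq, zero_add]
    exact (hA.mul hL).add (add_comm n m ▸ hB.mul hP)
  have hq0 := isHomogeneous_of_mul_right (mul_ne_zero hP0 hL0) (hP.mul hL) hhom
  rw [← MvPolynomial.totalDegree_zero_iff_isHomogeneous,
    MvPolynomial.totalDegree_eq_zero_iff_eq_C] at hq0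
  exact ⟨_, hq0 ▸ hq⟩

/-- Multiplying `a` by `gcd (p, l, h)`, a unit, gives an element divisible by `p`. -/
theorem dvd_of_dvd_mul_of_coprime {R : Type*} [CommRing R] [IsDomain R]
    [UniqueFactorizationMonoid R] {p l h a : R}
    (hcop : ∀ D : R, D ∣ p → D ∣ l → D ∣ h → IsUnit D) (hl : p ∣ a * l) (hh : p ∣ a * h) :
    p ∣ a := by
  let _ := UniqueFactorizationMonoid.toGCDMonoid R
  have hu : IsUnit (gcd p (gcd l h)) :=
    hcop _ (gcd_dvd_left _ _) ((gcd_dvd_right _ _).trans (gcd_dvd_left _ _))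
      ((gcd_dvd_right _ _).trans (gcd_dvd_right _ _))
  have h1 : p ∣ a * gcd l h := (dvd_gcd hl hh).trans (gcd_mul_left' a l h).dvd
  have h2 : p ∣ a * gcd p (gcd l h) :=
    (dvd_gcd (dvd_mul_left p a) h1).trans (gcd_mul_left' a p (gcd l h)).dvd
  exact hu.dvd_mul_right.1 h2

/-- description of the kernel of the differential of the multiplication
map. Let `k` be a field, `1 ≤ d₁ < d₂`, `1 ≤ K ≤ d₁-1`, let `P, L, H ∈ k[X₀,X₁]` be nonzero
homogeneous of degrees `d₁-K`, `K` and `d₂-d₁+K`, let `Π` be a homogeneous common divisor of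
degree `d`, `P = Π·P′`, `L = Π·L′`, `H = Π·H′`, with every common divisor of `P′, L′, H′` a
unit. Then for homogeneous `A, B, C` of degrees `d₁-K`, `K`, `d₂-d₁+K`:
`P·L ∣ A·L + B·P` and `P·H ∣ A·H + C·P` if and only if there are a homogeneous `Π′` of
degree `d` and scalars `α, β, γ` with `A = Π′·P′ + α·P`, `B = -Π′·L′ + β·L`,
`C = -Π′·H′ + γ·H`. -/
theorem statement15 (k : Type) [Field k] (d₁ d₂ K d : ℕ) (hd₁ : 1 ≤ d₁) (hd : d₁ < d₂)
    (hK1 : 1 ≤ K) (hK2 : K ≤ d₁ - 1)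
    (P L H : MvPolynomial (Fin 2) k) (hP0 : P ≠ 0) (hL0 : L ≠ 0) (hH0 : H ≠ 0)
    (hP : P.IsHomogeneous (d₁ - K)) (hL : L.IsHomogeneous K)
    (hH : H.IsHomogeneous (d₂ - d₁ + K))
    (Pi : MvPolynomial (Fin 2) k) (hPi : Pi.IsHomogeneous d)
    (P' L' H' : MvPolynomial (Fin 2) k)
    (hP' : P = Pi * P') (hL' : L = Pi * L') (hH' : H = Pi * H')
    (hcop : ∀ D : MvPolynomial (Fin 2) k, D ∣ P' → D ∣ L' → D ∣ H' → IsUnit D)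
    (A B C : MvPolynomial (Fin 2) k)
    (hA : A.IsHomogeneous (d₁ - K)) (hB : B.IsHomogeneous K)
    (hC : C.IsHomogeneous (d₂ - d₁ + K)) :
    (P * L ∣ A * L + B * P ∧ P * H ∣ A * H + C * P) ↔
    (∃ Pi' : MvPolynomial (Fin 2) k, ∃ α β γ : k,
      Pi'.IsHomogeneous d ∧
      A = Pi' * P' + MvPolynomial.C α * P ∧
      B = -(Pi' * L') + MvPolynomial.C β * L ∧
      C = -(Pi' * H') + MvPolynomial.C γ * H) := by
  constructor
  · rintro ⟨h1, h2⟩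
    obtain ⟨c, hc⟩ := exists_scalar_of_mul_dvd hP0 hL0 hP hL hA hB h1
    obtain ⟨e, he⟩ := exists_scalar_of_mul_dvd hP0 hH0 hP hH hA hC h2
    have hPi0 : Pi ≠ 0 := by
      rintro rfl
      exact hP0 (by rw [hP', zero_mul])
    have hP'0 : P' ≠ 0 := by
      rintro rfl
      exact hP0 (by rw [hP', mul_zero])
    have hAL : A * L' = P' * -(B - MvPolynomial.C c * L) := by
      apply mul_left_cancel₀ hPi0
      linear_combination hc - A * hL' - (B - MvPolynomial.C c * L) * hP'
    have hAH : A * H' = P' * -(C - MvPolynomial.C e * H) := by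
      apply mul_left_cancel₀ hPi0
      linear_combination he - A * hH' - (C - MvPolynomial.C e * H) * hP'
    obtain ⟨Q, hQ⟩ := dvd_of_dvd_mul_of_coprime hcop ⟨_, hAL⟩ ⟨_, hAH⟩
    refine ⟨Q, 0, c, e, ?_, ?_, ?_, ?_⟩
    · refine isHomogeneous_of_mul_right hP0 hP ?_
      have hQP : Q * P = Pi * A := by rw [hP', hQ]; ring
      rw [hQP]
      exact hPi.mul hA
    · rw [hQ, MvPolynomial.C_0]; ring
    · apply mul_left_cancel₀ hP'0
      linear_combination hAL - L' * hQ
    · apply mul_left_cancel₀ hP'0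
      linear_combination hAH - H' * hQ
  · rintro ⟨Q, α, β, γ, -, rfl, rfl, rfl⟩
    refine ⟨⟨MvPolynomial.C (α + β), ?_⟩, ⟨MvPolynomial.C (α + γ), ?_⟩⟩
    · rw [MvPolynomial.C_add]
      linear_combination Q * P' * hL' - Q * L' * hP'
    · rw [MvPolynomial.C_add]
      linear_combination Q * P' * hH' - Q * H' * hP'

end
end

section
/- Let k be a field, let d₁ ≥ 1 be an integer, and let t ∈ k with t ≠ 0. Set F = Σ_{i=0}^{d₁} t^{i} X₀^{d₁−i} X₁^{i} and G = X₀·X₁·(Σ_{i=0}^{d₁−1} t^{i} X₀^{d₁−1−i} X₁^{i}) in k[X₀,X₁]. Then every common divisor of F and G is a unit. -/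
open MvPolynomial

noncomputable section

/-! Write `S` for the sum appearing in `G`, so that `G = X₀ X₁ S`. Splitting off the last, respectively
the first, term of `F` gives `F = X₀ S + t^d₁ X₁^d₁ = X₀^d₁ + t X₁ S`. Hence a common divisor of `F` and
`S` divides both `X₁^d₁` and `X₀^d₁`, a common divisor of `F` and `X₀` divides `X₁^d₁`, and a common
divisor of `F` and `X₁` divides `X₀^d₁`. Since `X₀` and `X₁` are non-associated primes, `F` is relatively
prime to each of `X₀`, `X₁`, `S`, and so to their product, as `k[X₀, X₁]` is factorial. -/

lemma isRelPrime_X_zero_X_one (k : Type) [Field k] :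
    IsRelPrime (X 0 : MvPolynomial (Fin 2) k) (X 1) := by
  rw [(X_prime (R := k) (i := (0 : Fin 2))).irreducible.isRelPrime_iff_not_dvd, X_dvd_X]
  simp

/-- an explicit complete one-parameter family of punctual complete
intersections. Let `k` be a field, `d₁ ≥ 1`, `t ≠ 0`, and set
`F = ∑_{i=0}^{d₁} tⁱ X₀^{d₁-i} X₁ⁱ` and `G = X₀·X₁·(∑_{i=0}^{d₁-1} tⁱ X₀^{d₁-1-i} X₁ⁱ)`.
Then every common divisor of `F` and `G` is a unit. -/
theorem statement16 (k : Type) [Field k] (d₁ : ℕ) (hd₁ : 1 ≤ d₁) (t : k) (ht : t ≠ 0)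
    (D : MvPolynomial (Fin 2) k)
    (hDF : D ∣ ∑ i ∈ Finset.range (d₁ + 1), C (t ^ i) * X 0 ^ (d₁ - i) * X 1 ^ i)
    (hDG : D ∣ X 0 * X 1 *
      ∑ i ∈ Finset.range d₁, C (t ^ i) * X 0 ^ (d₁ - 1 - i) * X 1 ^ i) :
    IsUnit D := by
  have hlast : ∑ i ∈ Finset.range (d₁ + 1), C (t ^ i) * X 0 ^ (d₁ - i) * X 1 ^ i
      = X 0 * (∑ i ∈ Finset.range d₁, C (t ^ i) * X 0 ^ (d₁ - 1 - i) * X 1 ^ i)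
        + C (t ^ d₁) * (X 1 : MvPolynomial (Fin 2) k) ^ d₁ := by
    rw [Finset.sum_range_succ, Finset.mul_sum]
    congr 1
    · refine Finset.sum_congr rfl fun i hi => ?_
      have hi' := Finset.mem_range.1 hi
      rw [show d₁ - i = (d₁ - 1 - i) + 1 by omega]
      ring
    · simp
  have hfirst : ∑ i ∈ Finset.range (d₁ + 1), C (t ^ i) * X 0 ^ (d₁ - i) * X 1 ^ i
      = C t * X 1 * (∑ i ∈ Finset.range d₁, C (t ^ i) * X 0 ^ (d₁ - 1 - i) * X 1 ^ i)
        + (X 0 : MvPolynomial (Fin 2) k) ^ d₁ := by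
    rw [Finset.sum_range_succ', Finset.mul_sum]
    congr 1
    · refine Finset.sum_congr rfl fun i hi => ?_
      rw [show d₁ - (i + 1) = d₁ - 1 - i by omega, pow_succ t, C_mul]
      ring
    · simp
  generalize (∑ i ∈ Finset.range (d₁ + 1), C (t ^ i) * X 0 ^ (d₁ - i) * X 1 ^ i :
    MvPolynomial (Fin 2) k) = F at *
  generalize (∑ i ∈ Finset.range d₁, C (t ^ i) * X 0 ^ (d₁ - 1 - i) * X 1 ^ i :
    MvPolynomial (Fin 2) k) = S at *
  have hX := isRelPrime_X_zero_X_one k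
  have hC : IsUnit (C (t ^ d₁) : MvPolynomial (Fin 2) k) :=
    (IsUnit.mk0 _ (pow_ne_zero _ ht)).map C
  have dvd_one {E : MvPolynomial (Fin 2) k} (hF : E ∣ F) (h : E ∣ X 0 * S) : E ∣ X 1 ^ d₁ := by
    rw [hlast, dvd_add_right h] at hF
    exact hC.dvd_mul_left.1 hF
  have dvd_zero {E : MvPolynomial (Fin 2) k} (hF : E ∣ F) (h : E ∣ C t * X 1 * S) :
      E ∣ X 0 ^ d₁ := by
    rwa [hfirst, dvd_add_right h] at hF
  have h0 : IsRelPrime F (X 0) := fun E hF h =>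
    hX.pow_right h (dvd_one hF (h.mul_right S))
  have h1 : IsRelPrime F (X 1) := fun E hF h =>
    hX.pow_left (dvd_zero hF ((h.mul_left _).mul_right S)) h
  have hS : IsRelPrime F S := fun E hF h =>
    hX.pow (dvd_zero hF (h.mul_left _)) (dvd_one hF (h.mul_left _))
  exact (h0.mul_right h1).mul_right hS hDF hDG

end
end
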